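/- Let d > 1 and 1 ≤ d₁ ≤ d be integers and let C > 0 be a real constant. There exist constants K > 0 and n₀ (depending only on d, d₁, and C) such that for every set system (X, S) with |X| = n ≥ n₀ satisfying the size-sensitive counting condition with parameters (C, d, d₁), there exists a coloring χ : X → {−1, +1} such that for every S ∈ S, |∑_{x∈S} χ(x)| ≤ K · |S|^{1/2 − d₁/(2d)} · n^{(d₁ − 1)/(2d)} · (log₂ n)^{3/2 + 1/(2d)}. -/

import Mathlib

theorem min_aux (a b c e : ℝ) :
    min a b + min c e ≤ min (max a c) (max b e) + min (min a c) (min b e) := by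
  rcases le_total a b with h1 | h1 <;> rcases le_total c e with h2 | h2 <;>
  rcases le_total a c with h3 | h3 <;> rcases le_total b e with h4 | h4 <;>
  simp only [min_eq_left, min_eq_right, max_eq_left, max_eq_right, h1, h2, h3, h4] <;>
  first
  | linarith
  | (rcases le_total a e with h5 | h5 <;> rcases le_total b c with h6 | h6 <;>
      simp only [min_eq_left, min_eq_right, max_eq_left, max_eq_right, h1, h2, h3, h4, h5, h6] <;>
      linarith)

theorem oneincl {α : Type} [DecidableEq α] (A : Finset α) :
    ∀ (v : ℕ) (w : Finset α → ℝ), (∀ Q, 0 ≤ w Q) →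
    (∀ B ⊆ A, (∀ T ⊆ B, ∃ Q ⊆ A, 0 < w Q ∧ Q ∩ B = T) → B.card ≤ v) →
    ∑ a ∈ A, ∑ Q ∈ (A.erase a).powerset, min (w Q) (w (insert a Q)) ≤
      v * ∑ Q ∈ A.powerset, w Q := by
  induction A using Finset.induction_on with
  | empty =>
    intro v w hw _
    simp only [Finset.sum_empty]
    exact mul_nonneg (Nat.cast_nonneg _) (Finset.sum_nonneg fun _ _ => hw _)
  | insert x A hx ih =>
    intro v w hw hvc
    have hw1 : ∀ Q, 0 ≤ max (w Q) (w (insert x Q)) := fun Q => le_max_of_le_left (hw Q)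
    have hw2 : ∀ Q, 0 ≤ min (w Q) (w (insert x Q)) := fun Q => le_min (hw _) (hw _)
    have h1 := ih v (fun Q => max (w Q) (w (insert x Q))) hw1 (by
      intro B hB hsh
      apply hvc B (hB.trans (Finset.subset_insert _ _))
      intro T hT
      obtain ⟨Q, hQ, hpos, hQB⟩ := hsh T hT
      have hxB : x ∉ B := fun h => hx (hB h)
      rcases lt_max_iff.mp hpos with h | h
      · exact ⟨Q, hQ.trans (Finset.subset_insert _ _), h, hQB⟩
      · refine ⟨insert x Q, Finset.insert_subset_insert _ hQ, h, ?_⟩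
        rw [Finset.insert_inter_of_notMem hxB, hQB])
    have h2 : ∑ a ∈ A, ∑ Q ∈ (A.erase a).powerset,
          min (min (w Q) (w (insert x Q))) (min (w (insert a Q)) (w (insert x (insert a Q))))
        + ∑ Q ∈ A.powerset, min (w Q) (w (insert x Q)) ≤
        v * ∑ Q ∈ A.powerset, min (w Q) (w (insert x Q)) := by
      cases v with
      | zero =>
        have hz : ∀ Q ⊆ A, min (w Q) (w (insert x Q)) = 0 := by
          intro Q hQ
          by_contra hne
          have hpos : 0 < min (w Q) (w (insert x Q)) := lt_of_le_of_ne (hw2 Q) (Ne.symm hne)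
          have := hvc {x} (by simp) (by
            intro T hT
            rcases Finset.subset_singleton_iff.mp hT with rfl | rfl
            · refine ⟨Q, hQ.trans (Finset.subset_insert _ _), (lt_min_iff.mp hpos).1, ?_⟩
              rw [Finset.inter_singleton_of_notMem (fun h => hx (hQ h))]
            · refine ⟨insert x Q, Finset.insert_subset_insert _ hQ, (lt_min_iff.mp hpos).2, ?_⟩
              rw [Finset.inter_singleton_of_mem (Finset.mem_insert_self _ _)])
          simp at this
        have e1 : ∑ Q ∈ A.powerset, min (w Q) (w (insert x Q)) = 0 :=
          Finset.sum_eq_zero fun Q hQ => hz Q (Finset.mem_powerset.mp hQ)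
        have e2 : ∑ a ∈ A, ∑ Q ∈ (A.erase a).powerset,
          min (min (w Q) (w (insert x Q))) (min (w (insert a Q)) (w (insert x (insert a Q)))) = 0 := by
          refine Finset.sum_eq_zero fun a ha => Finset.sum_eq_zero fun Q hQ => ?_
          have hQ' : Q ⊆ A := (Finset.mem_powerset.mp hQ).trans (Finset.erase_subset _ _)
          rw [hz Q hQ', hz (insert a Q) (Finset.insert_subset ha hQ')]
          simp
        rw [e1, e2]; simp
      | succ v' =>
        have := ih v' (fun Q => min (w Q) (w (insert x Q))) hw2 (by
          intro B hB hsh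
          have hxB : x ∉ B := fun h => hx (hB h)
          have := hvc (insert x B) (Finset.insert_subset_insert _ hB) (by
            intro T hT
            obtain ⟨Q, hQ, hpos, hQB⟩ := hsh (T.erase x) (by
              intro y hy
              have := hT (Finset.mem_of_mem_erase hy)
              exact (Finset.mem_insert.mp this).resolve_left (Finset.ne_of_mem_erase hy))
            have hxQ : x ∉ Q := fun h => hx (hQ h)
            by_cases hxT : x ∈ T
            · refine ⟨insert x Q, Finset.insert_subset_insert _ hQ, (lt_min_iff.mp hpos).2, ?_⟩
              rw [← Finset.insert_inter_distrib, hQB, Finset.insert_erase hxT]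
            · refine ⟨Q, hQ.trans (Finset.subset_insert _ _), (lt_min_iff.mp hpos).1, ?_⟩
              rw [Finset.inter_insert_of_notMem hxQ, hQB, Finset.erase_eq_of_notMem hxT])
          rw [Finset.card_insert_of_notMem hxB] at this
          omega)
        push_cast
        linarith
    have e0 : ∑ Q ∈ (insert x A).powerset, w Q =
        ∑ Q ∈ A.powerset, max (w Q) (w (insert x Q)) +
        ∑ Q ∈ A.powerset, min (w Q) (w (insert x Q)) := by
      rw [Finset.sum_powerset_insert hx, ← Finset.sum_add_distrib, ← Finset.sum_add_distrib]
      refine Finset.sum_congr rfl fun Q _ => ?_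
      rw [max_add_min]
    rw [Finset.sum_insert hx, Finset.erase_insert hx, e0, mul_add]
    have h3 : ∑ a ∈ A, ∑ Q ∈ ((insert x A).erase a).powerset, min (w Q) (w (insert a Q)) ≤
        ∑ a ∈ A, ∑ Q ∈ (A.erase a).powerset,
          min (max (w Q) (w (insert x Q))) (max (w (insert a Q)) (w (insert x (insert a Q)))) +
        ∑ a ∈ A, ∑ Q ∈ (A.erase a).powerset,
          min (min (w Q) (w (insert x Q))) (min (w (insert a Q)) (w (insert x (insert a Q)))) := by
      rw [← Finset.sum_add_distrib]
      refine Finset.sum_le_sum fun a ha => ?_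
      have hax : x ≠ a := fun h => hx (h ▸ ha)
      rw [Finset.erase_insert_of_ne hax,
        Finset.sum_powerset_insert (fun h => hx (Finset.mem_of_mem_erase h)),
        ← Finset.sum_add_distrib, ← Finset.sum_add_distrib]
      refine Finset.sum_le_sum fun Q _ => ?_
      rw [Finset.insert_comm a x Q]
      exact min_aux _ _ _ _
    linarith


theorem class_sep {α : Type} [DecidableEq α] (Y A Q : Finset α) (G : Finset (Finset α)) (δ : ℝ)
    (hY : ∀ T ∈ G, T ⊆ Y) (hA : ∀ T ∈ G, T ∩ A = Q)
    (hsep : ∀ T ∈ G, ∀ T' ∈ G, T ≠ T' → δ ≤ ((symmDiff T T').card : ℝ)) (hG : G.Nonempty) :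
    δ / 2 * ((G.card : ℝ) - 1) ≤ ∑ a ∈ Y \ A,
      min ((G.filter fun T => a ∉ T).card : ℝ) ((G.filter fun T => a ∈ T).card : ℝ) := by
  have hb : (0 : ℝ) < G.card := by exact_mod_cast hG.card_pos
  have h1 : ∑ a ∈ Y \ A, ((G.filter fun T => a ∉ T).card : ℝ) * ((G.filter fun T => a ∈ T).card : ℝ)
      ≤ G.card * ∑ a ∈ Y \ A,
      min ((G.filter fun T => a ∉ T).card : ℝ) ((G.filter fun T => a ∈ T).card : ℝ) := by
    rw [Finset.mul_sum]
    refine Finset.sum_le_sum fun a _ => ?_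
    have e : (G.card : ℝ) = ((G.filter fun T => a ∈ T).card : ℝ) + ((G.filter fun T => a ∉ T).card : ℝ) := by
      exact_mod_cast (Finset.card_filter_add_card_filter_not (s := G) (fun T => a ∈ T)).symm
    rw [e]
    have p1 : (0:ℝ) ≤ ((G.filter fun T => a ∈ T).card : ℝ) := Nat.cast_nonneg _
    have p2 : (0:ℝ) ≤ ((G.filter fun T => a ∉ T).card : ℝ) := Nat.cast_nonneg _
    rcases le_total ((G.filter fun T => a ∉ T).card : ℝ) ((G.filter fun T => a ∈ T).card : ℝ) with h | h
    · rw [min_eq_left h]; nlinarith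
    · rw [min_eq_right h]; nlinarith
  have h2 : ∑ a ∈ Y \ A, ((G.filter fun T => a ∉ T).card : ℝ) * ((G.filter fun T => a ∈ T).card : ℝ)
      = ∑ T ∈ G, ∑ T' ∈ G, ((T' \ T).card : ℝ) := by
    have : ∀ a, ((G.filter fun T => a ∉ T).card : ℝ) * ((G.filter fun T => a ∈ T).card : ℝ) =
        ∑ T ∈ G, ∑ T' ∈ G, (if a ∈ T' ∧ a ∉ T then (1:ℝ) else 0) := by
      intro a
      rw [Finset.card_filter, Finset.card_filter]
      push_cast
      rw [Finset.sum_mul_sum]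
      refine Finset.sum_congr rfl fun T _ => Finset.sum_congr rfl fun T' _ => ?_
      by_cases h1 : a ∈ T <;> by_cases h2 : a ∈ T' <;> simp [h1, h2]
    simp_rw [this]
    rw [Finset.sum_comm]
    refine Finset.sum_congr rfl fun T hT => ?_
    rw [Finset.sum_comm]
    refine Finset.sum_congr rfl fun T' hT' => ?_
    rw [← Finset.sum_filter, Finset.sum_const, nsmul_eq_mul, mul_one]
    congr 2
    ext a
    simp only [Finset.mem_filter, Finset.mem_sdiff]
    constructor
    · rintro ⟨_, h⟩; exact h
    · rintro ⟨h1, h2⟩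
      refine ⟨⟨hY T' hT' h1, fun haA => h2 ?_⟩, h1, h2⟩
      have : a ∈ T' ∩ A := Finset.mem_inter.mpr ⟨h1, haA⟩
      rw [hA T' hT', ← hA T hT] at this
      exact (Finset.mem_inter.mp this).1
  have h3 : 2 * ∑ T ∈ G, ∑ T' ∈ G, ((T' \ T).card : ℝ) =
      ∑ T ∈ G, ∑ T' ∈ G, ((symmDiff T T').card : ℝ) := by
    rw [two_mul]
    nth_rw 2 [Finset.sum_comm]
    rw [← Finset.sum_add_distrib]
    refine Finset.sum_congr rfl fun T _ => ?_
    rw [← Finset.sum_add_distrib]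
    refine Finset.sum_congr rfl fun T' _ => ?_
    rw [Finset.symmDiff_def]
    rw [Finset.card_union_of_disjoint disjoint_sdiff_sdiff]
    push_cast; ring
  have h4 : δ * (G.card * ((G.card : ℝ) - 1)) ≤ ∑ T ∈ G, ∑ T' ∈ G, ((symmDiff T T').card : ℝ) := by
    have : ∀ T ∈ G, δ * ((G.card : ℝ) - 1) ≤ ∑ T' ∈ G, ((symmDiff T T').card : ℝ) := by
      intro T hT
      rw [← Finset.add_sum_erase _ _ hT]
      have h5 : ∑ T' ∈ G.erase T, δ ≤ ∑ T' ∈ G.erase T, ((symmDiff T T').card : ℝ) :=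
        Finset.sum_le_sum fun T' hT' => hsep T hT T' (Finset.mem_of_mem_erase hT')
          (Finset.ne_of_mem_erase hT').symm
      rw [Finset.sum_const, nsmul_eq_mul, Finset.cast_card_erase_of_mem hT] at h5
      simp only [symmDiff_self, Finset.bot_eq_empty, Finset.card_empty, Nat.cast_zero, zero_add]
      linarith
    have := Finset.sum_le_sum this
    rw [Finset.sum_const, nsmul_eq_mul] at this
    linarith
  have h5 : (G.card : ℝ) * (δ / 2 * ((G.card : ℝ) - 1)) ≤ G.card * ∑ a ∈ Y \ A,
      min ((G.filter fun T => a ∉ T).card : ℝ) ((G.filter fun T => a ∈ T).card : ℝ) := by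
    linarith
  exact le_of_mul_le_mul_left h5 hb

theorem lowerA {α : Type} [DecidableEq α] (Y A : Finset α) (P : Finset (Finset α)) (δ : ℝ)
    (hY : ∀ T ∈ P, T ⊆ Y)
    (hsep : ∀ T ∈ P, ∀ T' ∈ P, T ≠ T' → δ ≤ ((symmDiff T T').card : ℝ)) :
    δ / 2 * ((P.card : ℝ) - ((P.image (· ∩ A)).card : ℝ)) ≤
      ∑ a ∈ Y \ A, ∑ Q ∈ A.powerset,
        min ((P.filter fun T => T ∩ insert a A = Q).card : ℝ)
          ((P.filter fun T => T ∩ insert a A = insert a Q).card : ℝ) := by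
  rw [Finset.sum_comm]
  have hsub : P.image (· ∩ A) ⊆ A.powerset := by
    intro Q hQ
    obtain ⟨T, _, rfl⟩ := Finset.mem_image.mp hQ
    exact Finset.mem_powerset.mpr Finset.inter_subset_right
  refine le_trans ?_ (Finset.sum_le_sum_of_subset_of_nonneg hsub
    fun Q _ _ => Finset.sum_nonneg fun a _ => le_min (Nat.cast_nonneg _) (Nat.cast_nonneg _))
  have e : (P.card : ℝ) = ∑ Q ∈ P.image (· ∩ A), ((P.filter fun T => T ∩ A = Q).card : ℝ) := by
    exact_mod_cast Finset.card_eq_sum_card_image (· ∩ A) P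
  have e2 : (P.card : ℝ) - ((P.image (· ∩ A)).card : ℝ) =
      ∑ Q ∈ P.image (· ∩ A), (((P.filter fun T => T ∩ A = Q).card : ℝ) - 1) := by
    rw [Finset.sum_sub_distrib, ← e]; simp
  rw [e2, Finset.mul_sum]
  refine Finset.sum_le_sum fun Q hQ => ?_
  obtain ⟨T0, hT0, hT0Q⟩ := Finset.mem_image.mp hQ
  have hQA : Q ⊆ A := Finset.mem_powerset.mp (hsub hQ)
  refine (class_sep Y A Q (P.filter fun T => T ∩ A = Q) δ
    (fun T hT => hY T (Finset.mem_filter.mp hT).1) (fun T hT => (Finset.mem_filter.mp hT).2)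
    (fun T hT T' hT' => hsep T (Finset.mem_filter.mp hT).1 T' (Finset.mem_filter.mp hT').1)
    ⟨T0, Finset.mem_filter.mpr ⟨hT0, hT0Q⟩⟩).trans (le_of_eq ?_)
  refine Finset.sum_congr rfl fun a ha => ?_
  have haA : a ∉ A := (Finset.mem_sdiff.mp ha).2
  have haQ : a ∉ Q := fun h => haA (hQA h)
  rw [Finset.filter_filter, Finset.filter_filter]
  congr 3
  · ext T
    simp only [Finset.mem_filter, and_congr_right_iff]
    intro _
    by_cases haT : a ∈ T
    · rw [Finset.inter_insert_of_mem haT]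
      constructor
      · intro h; exact absurd haT h.2
      · intro h; exact absurd (h ▸ Finset.mem_insert_self a _) haQ
    · rw [Finset.inter_insert_of_notMem haT]; simp [haT]
  · ext T
    simp only [Finset.mem_filter, and_congr_right_iff]
    intro _
    by_cases haT : a ∈ T
    · rw [Finset.inter_insert_of_mem haT]
      constructor
      · intro h; rw [h.1]
      · intro h
        refine ⟨?_, haT⟩
        have h1 : a ∉ T ∩ A := fun h => haA (Finset.mem_inter.mp h).2
        rw [← Finset.erase_insert h1, h, Finset.erase_insert haQ]
    · rw [Finset.inter_insert_of_notMem haT]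
      constructor
      · intro h; exact absurd h.2 haT
      · intro h
        have : a ∈ T ∩ A := h ▸ Finset.mem_insert_self a Q
        exact absurd (Finset.mem_inter.mp this).1 haT

theorem swap_sum {α : Type} [DecidableEq α] (Y : Finset α) (t : ℕ) (f : Finset α → α → ℝ) :
    ∑ A ∈ Y.powersetCard t, ∑ a ∈ Y \ A, f (insert a A) a =
    ∑ A' ∈ Y.powersetCard (t+1), ∑ a ∈ A', f A' a := by
  rw [Finset.sum_sigma', Finset.sum_sigma']
  refine Finset.sum_bij' (fun p _ => ⟨insert p.2 p.1, p.2⟩) (fun p _ => ⟨p.1.erase p.2, p.2⟩)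
    ?_ ?_ ?_ ?_ ?_
  · rintro ⟨A, a⟩ h
    simp only [Finset.mem_sigma, Finset.mem_powersetCard, Finset.mem_sdiff] at h ⊢
    obtain ⟨⟨h1, h2⟩, h3, h4⟩ := h
    exact ⟨⟨Finset.insert_subset h3 h1, by rw [Finset.card_insert_of_notMem h4, h2]⟩,
      Finset.mem_insert_self _ _⟩
  · rintro ⟨A, a⟩ h
    simp only [Finset.mem_sigma, Finset.mem_powersetCard, Finset.mem_sdiff] at h ⊢
    obtain ⟨⟨h1, h2⟩, h3⟩ := h
    exact ⟨⟨(Finset.erase_subset _ _).trans h1, by rw [Finset.card_erase_of_mem h3, h2]; rfl⟩,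
      h1 h3, Finset.notMem_erase _ _⟩
  · rintro ⟨A, a⟩ h
    simp only [Finset.mem_sigma, Finset.mem_powersetCard, Finset.mem_sdiff] at h ⊢
    rw [Finset.erase_insert h.2.2]
  · rintro ⟨A, a⟩ h
    simp only [Finset.mem_sigma, Finset.mem_powersetCard] at h ⊢
    rw [Finset.insert_erase h.2]
  · rintro ⟨A, a⟩ h; rfl

theorem haussler {α : Type} [DecidableEq α] (Y : Finset α) (P : Finset (Finset α)) (δ : ℝ) (v t : ℕ)
    (hY : ∀ T ∈ P, T ⊆ Y)
    (hsep : ∀ T ∈ P, ∀ T' ∈ P, T ≠ T' → δ ≤ ((symmDiff T T').card : ℝ))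
    (hvc : ∀ B ⊆ Y, (∀ T ⊆ B, ∃ Q ∈ P, Q ∩ B = T) → B.card ≤ v) :
    δ / 2 * ∑ A ∈ Y.powersetCard t, ((P.card : ℝ) - ((P.image (· ∩ A)).card : ℝ)) ≤
      (Y.card.choose (t+1) : ℝ) * (v * P.card) := by
  rw [Finset.mul_sum]
  refine (Finset.sum_le_sum fun A _ => lowerA Y A P δ hY hsep).trans ?_
  have key := swap_sum Y t (fun A' a => ∑ Q ∈ (A'.erase a).powerset,
        min ((P.filter fun T => T ∩ A' = Q).card : ℝ)
          ((P.filter fun T => T ∩ A' = insert a Q).card : ℝ))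
  have e : ∑ A ∈ Y.powersetCard t, ∑ a ∈ Y \ A, ∑ Q ∈ A.powerset,
        min ((P.filter fun T => T ∩ insert a A = Q).card : ℝ)
          ((P.filter fun T => T ∩ insert a A = insert a Q).card : ℝ) =
      ∑ A ∈ Y.powersetCard t, ∑ a ∈ Y \ A, ∑ Q ∈ ((insert a A).erase a).powerset,
        min ((P.filter fun T => T ∩ insert a A = Q).card : ℝ)
          ((P.filter fun T => T ∩ insert a A = insert a Q).card : ℝ) := by
    refine Finset.sum_congr rfl fun A _ => Finset.sum_congr rfl fun a ha => ?_
    rw [Finset.erase_insert (Finset.mem_sdiff.mp ha).2]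
  rw [e, key]
  have hb : ∀ A' ∈ Y.powersetCard (t+1), ∑ a ∈ A', ∑ Q ∈ (A'.erase a).powerset,
        min ((P.filter fun T => T ∩ A' = Q).card : ℝ)
          ((P.filter fun T => T ∩ A' = insert a Q).card : ℝ) ≤ v * P.card := by
    intro A' hA'
    have hA'Y := (Finset.mem_powersetCard.mp hA').1
    have := oneincl A' v (fun Q => ((P.filter fun T => T ∩ A' = Q).card : ℝ))
      (fun _ => Nat.cast_nonneg _) (by
        intro B hB hsh
        apply hvc B (hB.trans hA'Y)
        intro T hT
        obtain ⟨Q, hQ, hpos, hQB⟩ := hsh T hT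
        have hpos' : 0 < (P.filter fun T => T ∩ A' = Q).card := by exact_mod_cast hpos
        obtain ⟨R, hR⟩ := Finset.card_pos.mp hpos'
        obtain ⟨hR1, hR2⟩ := Finset.mem_filter.mp hR
        refine ⟨R, hR1, ?_⟩
        rw [← hQB, ← hR2, Finset.inter_assoc, Finset.inter_eq_right.mpr hB])
    refine this.trans (le_of_eq ?_)
    congr 1
    have h := Finset.card_eq_sum_card_fiberwise (s := P) (t := A'.powerset) (f := (· ∩ A'))
      (fun T _ => by simp)
    rw [h]; push_cast; rfl
  refine (Finset.sum_le_sum hb).trans (le_of_eq ?_)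
  rw [Finset.sum_const, Finset.card_powersetCard, nsmul_eq_mul]


theorem card_mem_pc {α : Type} [DecidableEq α] (Y : Finset α) (t : ℕ) (ht : 1 ≤ t) (x : α) (hx : x ∈ Y) :
    (Y.card : ℝ) * (((Y.powersetCard t).filter fun A => x ∈ A).card : ℝ) = t * (Y.card.choose t : ℝ) := by
  have h := Finset.card_filter_powersetCard_subset {x} Y t (by simpa using hx) (by simpa using ht)
  simp only [Finset.singleton_subset_iff, Finset.card_singleton] at h
  rw [h]
  obtain ⟨s, rfl⟩ : ∃ s, t = s + 1 := ⟨t - 1, by omega⟩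
  obtain ⟨m, hm⟩ : ∃ m, Y.card = m + 1 := ⟨Y.card - 1, by have := Finset.card_pos.mpr ⟨x, hx⟩; omega⟩
  rw [hm]
  have := Nat.add_one_mul_choose_eq m s
  simp only [Nat.add_sub_cancel]
  rw [mul_comm ((s+1 : ℕ) : ℝ)]
  exact_mod_cast this

theorem markov_pc {α : Type} [DecidableEq α] (Y : Finset α) (P : Finset (Finset α)) (t κ k : ℕ) (ht : 1 ≤ t)
    (hY : ∀ T ∈ P, T ⊆ Y) (hk : ∀ T ∈ P, T.card ≤ k) :
    (Y.card : ℝ) * (κ * ∑ A ∈ Y.powersetCard t, ((P.filter fun T => κ < (T ∩ A).card).card : ℝ)) ≤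
      P.card * (k * (t * (Y.card.choose t : ℝ))) := by
  have h1 : (κ : ℝ) * ∑ A ∈ Y.powersetCard t, ((P.filter fun T => κ < (T ∩ A).card).card : ℝ) ≤
      ∑ T ∈ P, ∑ x ∈ T, (((Y.powersetCard t).filter fun A => x ∈ A).card : ℝ) := by
    have e : ∑ T ∈ P, ∑ x ∈ T, (((Y.powersetCard t).filter fun A => x ∈ A).card : ℝ) =
        ∑ A ∈ Y.powersetCard t, ∑ T ∈ P, ((T ∩ A).card : ℝ) := by
      rw [Finset.sum_comm]
      refine Finset.sum_congr rfl fun T _ => ?_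
      simp_rw [Finset.card_filter]
      push_cast
      rw [Finset.sum_comm]
      refine Finset.sum_congr rfl fun A _ => ?_
      rw [← Finset.sum_filter, Finset.sum_const, nsmul_eq_mul, mul_one, Finset.filter_mem_eq_inter]
    rw [e, Finset.mul_sum]
    refine Finset.sum_le_sum fun A _ => ?_
    have : ∑ T ∈ P.filter (fun T => κ < (T ∩ A).card), (κ : ℝ) ≤ ∑ T ∈ P, ((T ∩ A).card : ℝ) := by
      refine (Finset.sum_le_sum fun T hT => ?_).trans
        (Finset.sum_le_sum_of_subset_of_nonneg (Finset.filter_subset _ _) fun _ _ _ => Nat.cast_nonneg _)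
      exact_mod_cast (Finset.mem_filter.mp hT).2.le
    rw [Finset.sum_const, nsmul_eq_mul] at this
    linarith
  refine (mul_le_mul_of_nonneg_left h1 (Nat.cast_nonneg _)).trans ?_
  rw [Finset.mul_sum, ← nsmul_eq_mul, ← Finset.sum_const]
  refine Finset.sum_le_sum fun T hT => ?_
  rw [Finset.mul_sum, Finset.sum_congr rfl fun x hx => card_mem_pc Y t ht x (hY T hT hx),
    Finset.sum_const, nsmul_eq_mul]
  have : (T.card : ℝ) ≤ k := by exact_mod_cast hk T hT
  exact mul_le_mul_of_nonneg_right this (by positivity)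

theorem packing_core {α : Type} [DecidableEq α] (Y : Finset α) (P : Finset (Finset α))
    (δ U : ℝ) (v t κ k : ℕ) (ht : 1 ≤ t) (htm : t ≤ Y.card) (hδ : 0 < δ) (hκ : 1 ≤ κ)
    (hY : ∀ T ∈ P, T ⊆ Y) (hk : ∀ T ∈ P, T.card ≤ k)
    (hsep : ∀ T ∈ P, ∀ T' ∈ P, T ≠ T' → δ ≤ ((symmDiff T T').card : ℝ))
    (hvc : ∀ B ⊆ Y, (∀ T ⊆ B, ∃ Q ∈ P, Q ∩ B = T) → B.card ≤ v)
    (h1 : 4 * (Y.card : ℝ) * v ≤ δ * (t + 1)) (h2 : 4 * (k : ℝ) * t ≤ Y.card * κ)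
    (hU : ∀ A ∈ Y.powersetCard t, (((P.image (· ∩ A)).filter fun T => T.card ≤ κ).card : ℝ) ≤ U) :
    (P.card : ℝ) ≤ 4 * U := by
  have hH := haussler Y P δ v t hY hsep hvc
  have hM := markov_pc Y P t κ k ht hY hk
  have hN : (0 : ℝ) < Y.card.choose t := by exact_mod_cast Nat.choose_pos htm
  have hm : (0:ℝ) < Y.card := by exact_mod_cast (by omega : 0 < Y.card)
  have hκ' : (0:ℝ) < κ := by exact_mod_cast hκ
  set N : ℝ := ((Y.card.choose t : ℕ) : ℝ) with hNdef
  set bad := ∑ A ∈ Y.powersetCard t, ((P.filter fun T => κ < (T ∩ A).card).card : ℝ) with hbad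
  have hp : (0:ℝ) ≤ P.card := Nat.cast_nonneg _
  have hbad1 : bad ≤ P.card * N / 4 := by
    have : (Y.card * κ) * bad ≤ (Y.card * κ) * (P.card * N / 4) := by
      have := mul_le_mul_of_nonneg_right h2 (mul_nonneg hp hN.le)
      nlinarith
    exact le_of_mul_le_mul_left this (by positivity)
  set sm := ∑ A ∈ Y.powersetCard t, ((P.card : ℝ) - ((P.image (· ∩ A)).card : ℝ)) with hsm
  have hch : (Y.card.choose (t+1) : ℝ) * (t+1) ≤ N * Y.card := by
    have h := Nat.choose_succ_right_eq Y.card t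
    have h' : Y.card.choose (t+1) * (t+1) ≤ Y.card.choose t * Y.card := by
      rw [h]; exact Nat.mul_le_mul_left _ (Nat.sub_le _ _)
    rw [hNdef]
    exact_mod_cast h'
  have hsm1 : sm ≤ N * P.card / 2 := by
    have ht' : (0:ℝ) < (t:ℝ)+1 := by positivity
    have a1 : (δ / 2 * sm) * (t+1) ≤ (N * Y.card) * (v * P.card) := by
      refine (mul_le_mul_of_nonneg_right hH ht'.le).trans ?_
      have := mul_le_mul_of_nonneg_right hch (by positivity : (0:ℝ) ≤ v * P.card)
      linarith
    have a2 := mul_le_mul_of_nonneg_right h1 (mul_nonneg hN.le hp)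
    have : (δ * (t+1)) * sm ≤ (δ * (t+1)) * (N * P.card / 2) := by nlinarith
    exact le_of_mul_le_mul_left this (by positivity)
  have hA : ∀ A ∈ Y.powersetCard t, ((P.image (· ∩ A)).card : ℝ) ≤
      U + ((P.filter fun T => κ < (T ∩ A).card).card : ℝ) := by
    intro A hA
    have := hU A hA
    have e : (P.image (· ∩ A)).card ≤ ((P.image (· ∩ A)).filter fun T => T.card ≤ κ).card +
        (P.filter fun T => κ < (T ∩ A).card).card := by
      rw [← Finset.card_filter_add_card_filter_not (s := P.image (· ∩ A)) (fun T => T.card ≤ κ)]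
      refine Nat.add_le_add_left ?_ _
      refine (Finset.card_le_card (t := (P.filter fun T => κ < (T ∩ A).card).image (· ∩ A)) ?_).trans
        Finset.card_image_le
      intro Q hQ
      obtain ⟨hQ1, hQ2⟩ := Finset.mem_filter.mp hQ
      obtain ⟨T, hT, rfl⟩ := Finset.mem_image.mp hQ1
      exact Finset.mem_image.mpr ⟨T, Finset.mem_filter.mpr ⟨hT, not_le.mp hQ2⟩, rfl⟩
    have e' : ((P.image (· ∩ A)).card : ℝ) ≤ (((P.image (· ∩ A)).filter fun T => T.card ≤ κ).card : ℝ) +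
        ((P.filter fun T => κ < (T ∩ A).card).card : ℝ) := by exact_mod_cast e
    linarith
  have hS := Finset.sum_le_sum hA
  rw [Finset.sum_add_distrib, Finset.sum_const, Finset.card_powersetCard, nsmul_eq_mul] at hS
  have hs2 : sm = N * P.card - ∑ A ∈ Y.powersetCard t, ((P.image (· ∩ A)).card : ℝ) := by
    rw [hsm, Finset.sum_sub_distrib, Finset.sum_const, Finset.card_powersetCard, nsmul_eq_mul]
  have : N * P.card ≤ N * (4 * U) := by nlinarith
  exact le_of_mul_le_mul_left this hN

theorem vc_const (C : ℝ) (D : ℕ) : ∃ v : ℕ, 1 ≤ v ∧ ∀ b : ℕ, (2:ℝ)^b ≤ C * (b:ℝ)^D → b ≤ v := by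
  have h : Filter.Tendsto (fun n : ℕ => (n:ℝ)^D / (2:ℝ)^n) Filter.atTop (nhds 0) :=
    tendsto_pow_const_div_const_pow_of_one_lt D (by norm_num)
  have h2 := (h.const_mul C)
  rw [mul_zero] at h2
  have h3 := h2.eventually (gt_mem_nhds (show (0:ℝ) < 1 by norm_num))
  obtain ⟨v, hv⟩ := Filter.eventually_atTop.mp h3
  refine ⟨v + 1, by omega, fun b hb => ?_⟩
  by_contra hlt
  have := hv b (by omega)
  rw [← mul_div_assoc, div_lt_one (by positivity)] at this
  linarith

/-- shallow packing lemma -/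
theorem packing (C : ℝ) (hC : 0 < C) (d₁ e : ℕ) : ∃ c : ℝ, 0 < c ∧
    ∀ (α : Type) [DecidableEq α] (Y : Finset α) (P : Finset (Finset α)) (k : ℕ) (δ : ℝ),
      0 < δ → δ ≤ k → δ ≤ Y.card →
      (∀ T ∈ P, T ⊆ Y) → (∀ T ∈ P, T.card ≤ k) →
      (∀ T ∈ P, ∀ T' ∈ P, T ≠ T' → δ ≤ ((symmDiff T T').card : ℝ)) →
      (∀ Z ⊆ Y, 1 ≤ Z.card → ∀ κ : ℕ, 1 ≤ κ →
        (((P.image (· ∩ Z)).filter fun T => T.card ≤ κ).card : ℝ) ≤ C * (Z.card : ℝ)^d₁ * (κ : ℝ)^e) →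
      (P.card : ℝ) * δ^(d₁+e) ≤ c * (Y.card : ℝ)^d₁ * (k:ℝ)^e := by
  obtain ⟨v, hv1, hv⟩ := vc_const C (d₁+e)
  refine ⟨4 * C * (16 * v + 5)^(d₁+e), by positivity, ?_⟩
  intro α _ Y P k δ hδ hδk hδm hY hk hsep hcnt
  have hm : (0:ℝ) < Y.card := lt_of_lt_of_le hδ hδm
  have hm1 : 1 ≤ Y.card := by exact_mod_cast hm
  have hkr : (0:ℝ) < k := lt_of_lt_of_le hδ hδk
  have hk1 : 1 ≤ k := by exact_mod_cast hkr
  have hvr : (1:ℝ) ≤ v := by exact_mod_cast hv1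
  have hmd : 1 ≤ (Y.card : ℝ) / δ := by rwa [one_le_div hδ]
  have hkd : 1 ≤ (k : ℝ) / δ := by rwa [one_le_div hδ]
  have hvc : ∀ B ⊆ Y, (∀ T ⊆ B, ∃ Q ∈ P, Q ∩ B = T) → B.card ≤ v := by
    intro B hB hsh
    rcases Nat.eq_zero_or_pos B.card with h0 | h0
    · omega
    apply hv
    have h := hcnt B hB h0 B.card h0
    rw [mul_assoc, ← pow_add] at h
    refine le_trans ?_ h
    have : B.powerset ⊆ ((P.image (· ∩ B)).filter fun T => T.card ≤ B.card) := by
      intro T hT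
      have hT' := Finset.mem_powerset.mp hT
      obtain ⟨Q, hQ, hQT⟩ := hsh T hT'
      exact Finset.mem_filter.mpr ⟨Finset.mem_image.mpr ⟨Q, hQ, hQT⟩, Finset.card_le_card hT'⟩
    have := Finset.card_le_card this
    rw [Finset.card_powerset] at this
    exact_mod_cast this
  set t : ℕ := ⌈4 * (Y.card : ℝ) * v / δ⌉₊ with ht
  have hq : 0 < 4 * (Y.card : ℝ) * v / δ := by positivity
  have ht1 : 1 ≤ t := Nat.ceil_pos.mpr hq
  have htl : 4 * (Y.card : ℝ) * v / δ ≤ t := Nat.le_ceil _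
  have htu : (t : ℝ) ≤ (16 * v + 5) * (Y.card / δ) := by
    have : (t : ℝ) < 4 * (Y.card : ℝ) * v / δ + 1 := Nat.ceil_lt_add_one hq.le
    have e1 : 4 * (Y.card : ℝ) * v / δ = 4 * v * (Y.card / δ) := by ring
    rw [e1] at this
    nlinarith
  have htu' : (t : ℝ) ≤ (4 * v + 1) * (Y.card / δ) := by
    have : (t : ℝ) < 4 * (Y.card : ℝ) * v / δ + 1 := Nat.ceil_lt_add_one hq.le
    have e1 : 4 * (Y.card : ℝ) * v / δ = 4 * v * (Y.card / δ) := by ring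
    rw [e1] at this
    nlinarith
  rcases le_or_gt t Y.card with htm | htm
  · set κ : ℕ := ⌈4 * (k : ℝ) * t / Y.card⌉₊ with hκ
    have htr : (1:ℝ) ≤ t := by exact_mod_cast ht1
    have hq2 : 0 < 4 * (k : ℝ) * t / Y.card := by positivity
    have hκ1 : 1 ≤ κ := Nat.ceil_pos.mpr hq2
    have hκl : 4 * (k : ℝ) * t / Y.card ≤ κ := Nat.le_ceil _
    have hκu : (κ : ℝ) ≤ (16 * v + 5) * (k / δ) := by
      have h1 : (κ : ℝ) < 4 * (k : ℝ) * t / Y.card + 1 := Nat.ceil_lt_add_one hq2.le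
      have h2 : 4 * (k : ℝ) * t / Y.card ≤ 4 * (4 * v + 1) * (k / δ) := by
        rw [div_le_iff₀ hm]
        calc 4 * (k:ℝ) * t ≤ 4 * k * ((4 * v + 1) * (Y.card / δ)) := by gcongr
          _ = _ := by field_simp
      nlinarith
    have hc := packing_core Y P δ (C * (t:ℝ)^d₁ * (κ:ℝ)^e) v t κ k ht1 htm hδ hκ1 hY hk hsep hvc
      (by
        rw [div_le_iff₀ hδ] at htl
        nlinarith)
      (by
        rw [div_le_iff₀ hm] at hκl
        linarith)
      (by
        intro A hA
        obtain ⟨hA1, hA2⟩ := Finset.mem_powersetCard.mp hA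
        have := hcnt A hA1 (by omega) κ hκ1
        rwa [hA2] at this)
    calc (P.card : ℝ) * δ^(d₁+e) ≤ (4 * (C * ((16 * v + 5) * (Y.card / δ))^d₁ *
            ((16 * v + 5) * (k / δ))^e)) * δ^(d₁+e) := by
          refine mul_le_mul_of_nonneg_right (hc.trans ?_) (by positivity)
          gcongr
      _ = _ := by
          rw [mul_pow, mul_pow, div_pow, div_pow, pow_add, pow_add]
          field_simp
  · have hδs : δ ≤ 4 * v + 1 := by
      have : (Y.card : ℝ) ≤ (4 * v + 1) * (Y.card / δ) := by
        refine le_trans ?_ htu'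
        exact_mod_cast htm.le
      have h2 : (Y.card : ℝ) * δ ≤ Y.card * (4 * v + 1) := by
        have := mul_le_mul_of_nonneg_right this hδ.le
        field_simp at this
        nlinarith
      exact le_of_mul_le_mul_left h2 hm
    have hc := hcnt Y (Finset.Subset.refl _) hm1 k hk1
    have e1 : ((P.image (· ∩ Y)).filter fun T => T.card ≤ k) = P := by
      have : P.image (· ∩ Y) = P := by
        conv_rhs => rw [← Finset.image_id (s := P)]
        refine Finset.image_congr fun T hT => ?_
        exact Finset.inter_eq_left.mpr (hY T hT)
      rw [this, Finset.filter_true_of_mem hk]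
    rw [e1] at hc
    calc (P.card : ℝ) * δ^(d₁+e) ≤ (C * (Y.card : ℝ)^d₁ * (k : ℝ)^e) * (16 * v + 5)^(d₁+e) := by
          gcongr
          linarith
      _ ≤ _ := by
          have : 0 ≤ (C * (Y.card : ℝ)^d₁ * (k : ℝ)^e) * (16 * v + 5)^(d₁+e) := by positivity
          nlinarith


/-- sign of `x` in the colouring given by the subset `B` -/
noncomputable def sgn2 {α : Type} [DecidableEq α] (B : Finset α) (x : α) : ℝ := if x ∈ B then 1 else -1

theorem mgf_bound {α : Type} [DecidableEq α] (Y : Finset α) (a : α → ℝ) :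
    ∑ B ∈ Y.powerset, Real.exp (∑ x ∈ Y, a x * sgn2 B x) ≤
      2 ^ Y.card * Real.exp ((∑ x ∈ Y, a x ^ 2) / 2) := by
  have h1 : ∑ B ∈ Y.powerset, Real.exp (∑ x ∈ Y, a x * sgn2 B x) =
      ∏ x ∈ Y, (Real.exp (a x) + Real.exp (- a x)) := by
    rw [Finset.prod_add]
    refine Finset.sum_congr rfl fun B hB => ?_
    have hB' := Finset.mem_powerset.mp hB
    rw [Real.exp_sum, ← Finset.prod_sdiff hB', mul_comm]
    congr 1
    · refine Finset.prod_congr rfl fun x hx => ?_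
      simp [sgn2, hx]
    · refine Finset.prod_congr rfl fun x hx => ?_
      simp [sgn2, (Finset.mem_sdiff.mp hx).2]
  rw [h1, Finset.sum_div, Real.exp_sum, ← Finset.prod_const, ← Finset.prod_mul_distrib]
  refine Finset.prod_le_prod (fun x _ => by positivity) fun x _ => ?_
  have := Real.cosh_le_exp_half_sq (a x)
  rw [Real.cosh_eq] at this
  linarith

theorem tail_one {α : Type} [DecidableEq α] (Y : Finset α) (a : α → ℝ) (D Λ : ℝ) (hD : 0 < D)
    (hΛ : 0 ≤ Λ) (ha : ∑ x ∈ Y, a x ^ 2 = D) :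
    ((Y.powerset.filter fun B => Real.sqrt (Λ * D) < ∑ x ∈ Y, a x * sgn2 B x).card : ℝ) ≤
      2 ^ Y.card * Real.exp (- Λ / 2) := by
  set l := Real.sqrt (Λ * D) with hl
  have hl2 : l ^ 2 = Λ * D := Real.sq_sqrt (by positivity)
  have hl0 : 0 ≤ l := Real.sqrt_nonneg _
  have h := mgf_bound Y (fun x => (l / D) * a x)
  have e1 : ∑ x ∈ Y, ((l / D) * a x) ^ 2 = Λ := by
    simp_rw [mul_pow]
    rw [← Finset.mul_sum, ha, div_pow, hl2]
    field_simp
  rw [e1] at h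
  have h2 : ((Y.powerset.filter fun B => l < ∑ x ∈ Y, a x * sgn2 B x).card : ℝ) * Real.exp Λ ≤
      ∑ B ∈ Y.powerset, Real.exp (∑ x ∈ Y, (l / D) * a x * sgn2 B x) := by
    rw [← nsmul_eq_mul, ← Finset.sum_const]
    refine (Finset.sum_le_sum fun B hB => ?_).trans
      (Finset.sum_le_sum_of_subset_of_nonneg (Finset.filter_subset _ _) fun _ _ _ => (Real.exp_pos _).le)
    have hB' := (Finset.mem_filter.mp hB).2
    apply Real.exp_le_exp.mpr
    simp_rw [mul_assoc]
    rw [← Finset.mul_sum]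
    calc Λ = (l / D) * l := by field_simp; linarith
      _ ≤ _ := mul_le_mul_of_nonneg_left hB'.le (by positivity)
  have h3 := h2.trans h
  rw [← le_div_iff₀ (Real.exp_pos _), mul_div_assoc, ← Real.exp_sub] at h3
  have : Λ / 2 - Λ = - Λ / 2 := by ring
  rwa [this] at h3

theorem tail_two {α : Type} [DecidableEq α] (Y T T' : Finset α) (Λ : ℝ) (hΛ : 0 ≤ Λ)
    (hT : T ⊆ Y) (hT' : T' ⊆ Y) :
    ((Y.powerset.filter fun B => Real.sqrt (Λ * ((symmDiff T T').card : ℝ)) <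
      |∑ x ∈ T, sgn2 B x - ∑ x ∈ T', sgn2 B x|).card : ℝ) ≤
      2 ^ Y.card * (2 * Real.exp (- Λ / 2)) := by
  rcases Nat.eq_zero_or_pos (symmDiff T T').card with h0 | h0
  · have : T = T' := by
      rw [Finset.card_eq_zero] at h0
      exact symmDiff_eq_bot.mp h0
    subst this
    simp
    positivity
  have hD : (0:ℝ) < ((symmDiff T T').card : ℝ) := by exact_mod_cast h0
  let a : α → ℝ := fun x => (if x ∈ T then 1 else 0) - (if x ∈ T' then 1 else 0)
  have e1 : ∀ B, ∑ x ∈ T, sgn2 B x - ∑ x ∈ T', sgn2 B x = ∑ x ∈ Y, a x * sgn2 B x := by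
    intro B
    simp only [a, sub_mul, Finset.sum_sub_distrib, ite_mul, one_mul, zero_mul]
    rw [← Finset.sum_filter, ← Finset.sum_filter, Finset.filter_mem_eq_inter, Finset.filter_mem_eq_inter,
      Finset.inter_eq_right.mpr hT, Finset.inter_eq_right.mpr hT']
  have e2 : ∑ x ∈ Y, a x ^ 2 = ((symmDiff T T').card : ℝ) := by
    have : ∀ x, a x ^ 2 = if x ∈ symmDiff T T' then 1 else 0 := by
      intro x
      by_cases h1 : x ∈ T <;> by_cases h2 : x ∈ T' <;> simp [a, h1, h2, Finset.mem_symmDiff]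
    simp_rw [this]
    rw [← Finset.sum_filter, Finset.filter_mem_eq_inter, Finset.inter_eq_right.mpr, Finset.sum_const,
      nsmul_eq_mul, mul_one]
    intro x hx
    rcases Finset.mem_symmDiff.mp hx with h | h
    · exact hT h.1
    · exact hT' h.1
  have e3 : ∑ x ∈ Y, (- a x) ^ 2 = ((symmDiff T T').card : ℝ) := by simp [e2]
  have t1 := tail_one Y a _ Λ hD hΛ e2
  have t2 := tail_one Y (fun x => - a x) _ Λ hD hΛ e3
  simp_rw [e1]
  have hsub : (Y.powerset.filter fun B => Real.sqrt (Λ * ((symmDiff T T').card : ℝ)) <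
      |∑ x ∈ Y, a x * sgn2 B x|) ⊆
      (Y.powerset.filter fun B => Real.sqrt (Λ * ((symmDiff T T').card : ℝ)) < ∑ x ∈ Y, a x * sgn2 B x) ∪
      (Y.powerset.filter fun B => Real.sqrt (Λ * ((symmDiff T T').card : ℝ)) < ∑ x ∈ Y, - a x * sgn2 B x) := by
    intro B hB
    obtain ⟨h1, h2⟩ := Finset.mem_filter.mp hB
    rcases lt_abs.mp h2 with h | h
    · exact Finset.mem_union_left _ (Finset.mem_filter.mpr ⟨h1, h⟩)
    · refine Finset.mem_union_right _ (Finset.mem_filter.mpr ⟨h1, ?_⟩)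
      simpa [neg_mul, Finset.sum_neg_distrib] using h
  have := (Finset.card_le_card hsub).trans (Finset.card_union_le _ _)
  have : ((Y.powerset.filter fun B => Real.sqrt (Λ * ((symmDiff T T').card : ℝ)) <
      |∑ x ∈ Y, a x * sgn2 B x|).card : ℝ) ≤ _ := Nat.cast_le.mpr this
  push_cast at this
  linarith

theorem ball_bound {α : Type} [DecidableEq α] (Y : Finset α) (q E : ℕ) (hq : 1 ≤ q) (hqm : 10 * q ≤ Y.card)
    (hE : E ≤ q) :
    2 * (2:ℝ)^E * ((Y.powerset.filter fun D => D.card ≤ q).card : ℝ) < 2 ^ Y.card := by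
  have h1 : ((Y.powerset.filter fun D => D.card ≤ q).card : ℝ) ≤ 8^q * (9/8)^Y.card := by
    have h2 : ∑ D ∈ Y.powerset, ((1:ℝ)/8)^D.card = (9/8)^Y.card := by
      have := Finset.prod_add (fun _ => (1:ℝ)/8) (fun _ => (1:ℝ)) Y
      simp only [Finset.prod_const, one_pow, mul_one] at this
      rw [← this]; norm_num
    rw [← h2, Finset.mul_sum]
    rw [← nsmul_one, ← Finset.sum_const]
    refine (Finset.sum_le_sum fun D hD => ?_).trans
      (Finset.sum_le_sum_of_subset_of_nonneg (Finset.filter_subset _ _) fun _ _ _ => by positivity)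
    have hD' := (Finset.mem_filter.mp hD).2
    rw [one_div, inv_pow, ← div_eq_mul_inv, one_le_div (by positivity)]
    exact pow_le_pow_right₀ (by norm_num) hD'
  have h3 : (2:ℝ)^E ≤ 2^q := pow_le_pow_right₀ (by norm_num) hE
  obtain ⟨r, hr⟩ := Nat.exists_eq_add_of_le hqm
  have h4 : (2:ℝ)^Y.card = (16/9)^Y.card * (9/8)^Y.card := by
    rw [← mul_pow]; norm_num
  have h5 : (2:ℝ)^(8*q) ≤ (16/9)^Y.card := by
    calc (2:ℝ)^(8*q) = (2^8)^q := pow_mul _ _ _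
      _ ≤ ((16/9)^10)^q := by gcongr; norm_num
      _ = (16/9)^(10*q) := (pow_mul _ _ _).symm
      _ ≤ _ := pow_le_pow_right₀ (by norm_num) hqm
  have h6 : 2 * (2:ℝ)^q * 8^q < 2^(8*q) := by
    have : 2 * (2:ℝ)^q * 8^q = 2^(4*q+1) := by
      rw [pow_succ, pow_mul, mul_assoc, ← mul_pow]; norm_num; ring
    rw [this]
    exact pow_lt_pow_right₀ (by norm_num) (by omega)
  have hp : (0:ℝ) < (9/8)^Y.card := by positivity
  calc 2 * (2:ℝ)^E * ((Y.powerset.filter fun D => D.card ≤ q).card : ℝ)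
      ≤ 2 * (2:ℝ)^q * (8^q * (9/8)^Y.card) := by gcongr
    _ = (2 * (2:ℝ)^q * 8^q) * (9/8)^Y.card := by ring
    _ < 2^(8*q) * (9/8)^Y.card := mul_lt_mul_of_pos_right h6 hp
    _ ≤ (16/9)^Y.card * (9/8)^Y.card := by gcongr
    _ = _ := h4.symm

theorem partial_coloring {α ι : Type} [DecidableEq α] [DecidableEq ι] (Y : Finset α) (𝒯 : Finset (Finset α))
    (Λ : ℝ) (hΛ : 0 ≤ Λ) (h𝒯 : ∀ T ∈ 𝒯, T ⊆ Y)
    (hcard : (𝒯.card : ℝ)^2 * (2 * Real.exp (- Λ / 2)) ≤ 1 / 2)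
    (J : Finset ι) (F F' : ι → Finset α) (hF : ∀ i ∈ J, F i ∈ 𝒯) (hF' : ∀ i ∈ J, F' i ∈ 𝒯)
    (Δ : ι → ℝ) (hΔ : ∀ i ∈ J, 0 < Δ i) (ex : ι → ℕ)
    (hb : ∀ i ∈ J, 2 * Real.sqrt (Λ * ((symmDiff (F i) (F' i)).card : ℝ)) / Δ i + 1 ≤ 2 ^ ex i)
    (q : ℕ) (hq : 1 ≤ q) (hqm : 10 * q ≤ Y.card) (hE : ∑ i ∈ J, ex i ≤ q) :
    ∃ χ : α → ℤ, (∀ x, χ x = 0 ∨ χ x = 1 ∨ χ x = -1) ∧ q < (Y.filter fun x => χ x ≠ 0).card ∧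
      (∀ T ∈ 𝒯, ∀ T' ∈ 𝒯, |∑ x ∈ T, (χ x : ℝ) - ∑ x ∈ T', (χ x : ℝ)| ≤
        Real.sqrt (Λ * ((symmDiff T T').card : ℝ))) ∧
      ∀ i ∈ J, |∑ x ∈ F i, (χ x : ℝ) - ∑ x ∈ F' i, (χ x : ℝ)| ≤ Δ i := by
  classical
  set f : Finset α → Finset α → ℝ := fun B T => ∑ x ∈ T, sgn2 B x with hf
  set 𝒢 := Y.powerset.filter (fun B => ∀ T ∈ 𝒯, ∀ T' ∈ 𝒯, |f B T - f B T'| ≤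
        Real.sqrt (Λ * ((symmDiff T T').card : ℝ))) with h𝒢
  have hGcard : (2:ℝ)^Y.card ≤ 2 * 𝒢.card := by
    have hsub : Y.powerset ⊆ 𝒢 ∪ (𝒯 ×ˢ 𝒯).biUnion (fun p => Y.powerset.filter fun B =>
        Real.sqrt (Λ * ((symmDiff p.1 p.2).card : ℝ)) < |f B p.1 - f B p.2|) := by
      intro B hB
      by_cases hBG : B ∈ 𝒢
      · exact Finset.mem_union_left _ hBG
      · refine Finset.mem_union_right _ ?_
        have : ¬ ∀ T ∈ 𝒯, ∀ T' ∈ 𝒯, |f B T - f B T'| ≤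
            Real.sqrt (Λ * ((symmDiff T T').card : ℝ)) := fun h => hBG (Finset.mem_filter.mpr ⟨hB, h⟩)
        push Not at this
        obtain ⟨T, hT, T', hT', hlt⟩ := this
        exact Finset.mem_biUnion.mpr ⟨(T, T'), Finset.mem_product.mpr ⟨hT, hT'⟩,
          Finset.mem_filter.mpr ⟨hB, hlt⟩⟩
    have h1 := (Finset.card_le_card hsub).trans (Finset.card_union_le _ _)
    have h2 := h1.trans (Nat.add_le_add_left Finset.card_biUnion_le _)
    rw [Finset.card_powerset] at h2
    have h3 : ((2 ^ Y.card : ℕ) : ℝ) ≤ _ := Nat.cast_le.mpr h2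
    push_cast at h3
    have h4 : ∑ p ∈ 𝒯 ×ˢ 𝒯, ((Y.powerset.filter fun B =>
        Real.sqrt (Λ * ((symmDiff p.1 p.2).card : ℝ)) < |f B p.1 - f B p.2|).card : ℝ) ≤
        ∑ p ∈ 𝒯 ×ˢ 𝒯, 2 ^ Y.card * (2 * Real.exp (- Λ / 2)) := by
      refine Finset.sum_le_sum fun p hp => ?_
      obtain ⟨hp1, hp2⟩ := Finset.mem_product.mp hp
      exact tail_two Y p.1 p.2 Λ hΛ (h𝒯 _ hp1) (h𝒯 _ hp2)
    rw [Finset.sum_const, Finset.card_product, nsmul_eq_mul] at h4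
    push_cast at h4
    have hp : (0:ℝ) < 2^Y.card := by positivity
    have h5 := mul_le_mul_of_nonneg_left hcard hp.le
    nlinarith
  set V := (Y.powerset.filter fun D => D.card ≤ q).card with hV
  have hball := ball_bound Y q (∑ i ∈ J, ex i) hq hqm hE
  set z : Finset α → (i : ι) → i ∈ J → ℕ := fun B i _ =>
    ⌊(f B (F i) - f B (F' i) + Real.sqrt (Λ * ((symmDiff (F i) (F' i)).card : ℝ))) / Δ i⌋₊ with hz
  have hmaps : ∀ B ∈ 𝒢, z B ∈ J.pi (fun i => Finset.range (2 ^ ex i)) := by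
    intro B hB
    rw [Finset.mem_pi]
    intro i hi
    rw [Finset.mem_range]
    have hgood := (Finset.mem_filter.mp hB).2 _ (hF i hi) _ (hF' i hi)
    have hD := hΔ i hi
    have hbi := hb i hi
    obtain ⟨g1, g2⟩ := abs_le.mp hgood
    rw [hz]
    apply (Nat.floor_lt (div_nonneg (by linarith) hD.le)).mpr
    push_cast
    refine lt_of_lt_of_le ?_ hbi
    refine lt_of_le_of_lt ?_ (lt_add_one _)
    gcongr
    linarith
  have hlt : (J.pi (fun i => Finset.range (2 ^ ex i))).card * V < 𝒢.card := by
    rw [Finset.card_pi]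
    simp only [Finset.card_range]
    rw [Finset.prod_pow_eq_pow_sum]
    have : ((2:ℝ)^(∑ i ∈ J, ex i)) * V < 𝒢.card := by linarith
    exact_mod_cast this
  obtain ⟨y, _, hy⟩ := Finset.exists_lt_card_fiber_of_mul_lt_card_of_maps_to hmaps hlt
  set 𝒞 := 𝒢.filter (fun B => z B = y) with h𝒞
  have hne : 𝒞.Nonempty := Finset.card_pos.mp (by omega)
  obtain ⟨B0, hB0⟩ := hne
  have hex : ∃ B1 ∈ 𝒞, q < (symmDiff B1 B0).card := by
    by_contra hno
    push Not at hno
    have : 𝒞.card ≤ V := by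
      refine Finset.card_le_card_of_injOn (fun B => symmDiff B B0) ?_ ?_
      · intro B hB
        have hB' : B ∈ 𝒞 := hB
        have hBY := Finset.mem_powerset.mp (Finset.mem_filter.mp (Finset.mem_filter.mp hB').1).1
        have hBY0 := Finset.mem_powerset.mp (Finset.mem_filter.mp (Finset.mem_filter.mp hB0).1).1
        refine Finset.mem_coe.mpr (Finset.mem_filter.mpr ⟨Finset.mem_powerset.mpr ?_, hno B hB'⟩)
        intro x hx
        rcases Finset.mem_symmDiff.mp hx with h | h
        · exact hBY h.1
        · exact hBY0 h.1
      · intro B _ B' _ h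
        exact symmDiff_left_injective B0 h
    omega
  obtain ⟨B1, hB1, hq1⟩ := hex
  obtain ⟨hB1G, hz1⟩ := Finset.mem_filter.mp hB1
  obtain ⟨hB0G, hz0⟩ := Finset.mem_filter.mp hB0
  have hBY1 := Finset.mem_powerset.mp (Finset.mem_filter.mp hB1G).1
  have hBY0 := Finset.mem_powerset.mp (Finset.mem_filter.mp hB0G).1
  let χ : α → ℤ := fun x => (if x ∈ B1 then 1 else 0) - (if x ∈ B0 then 1 else 0)
  have hχ : ∀ x, (χ x : ℝ) = (sgn2 B1 x - sgn2 B0 x) / 2 := by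
    intro x
    by_cases h1 : x ∈ B1 <;> by_cases h2 : x ∈ B0 <;> simp [χ, sgn2, h1, h2] <;> norm_num
  have hsum : ∀ T, ∑ x ∈ T, (χ x : ℝ) = (f B1 T - f B0 T) / 2 := by
    intro T
    simp_rw [hχ]
    rw [← Finset.sum_div, Finset.sum_sub_distrib]
  refine ⟨χ, ?_, ?_, ?_, ?_⟩
  · intro x
    by_cases h1 : x ∈ B1 <;> by_cases h2 : x ∈ B0 <;> simp [χ, h1, h2]
  · refine lt_of_lt_of_le hq1 (Finset.card_le_card ?_)
    intro x hx
    rcases Finset.mem_symmDiff.mp hx with h | h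
    · exact Finset.mem_filter.mpr ⟨hBY1 h.1, by simp [χ, h.1, h.2]⟩
    · exact Finset.mem_filter.mpr ⟨hBY0 h.1, by simp [χ, h.1, h.2]⟩
  · intro T hT T' hT'
    have g1 := (Finset.mem_filter.mp hB1G).2 T hT T' hT'
    have g0 := (Finset.mem_filter.mp hB0G).2 T hT T' hT'
    rw [hsum, hsum]
    rw [abs_le] at *
    constructor <;> linarith [g1.1, g1.2, g0.1, g0.2]
  · intro i hi
    have hD := hΔ i hi
    have g1 := abs_le.mp ((Finset.mem_filter.mp hB1G).2 _ (hF i hi) _ (hF' i hi))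
    have g0 := abs_le.mp ((Finset.mem_filter.mp hB0G).2 _ (hF i hi) _ (hF' i hi))
    have heq : z B1 i hi = z B0 i hi := by rw [hz1, hz0]
    simp only [hz] at heq
    set R := Real.sqrt (Λ * ((symmDiff (F i) (F' i)).card : ℝ)) with hR
    have l1 := Nat.floor_le (div_nonneg (by linarith [g1.1] : 0 ≤ f B1 (F i) - f B1 (F' i) + R) hD.le)
    have u1 := Nat.lt_floor_add_one ((f B1 (F i) - f B1 (F' i) + R) / Δ i)
    have l0 := Nat.floor_le (div_nonneg (by linarith [g0.1] : 0 ≤ f B0 (F i) - f B0 (F' i) + R) hD.le)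
    have u0 := Nat.lt_floor_add_one ((f B0 (F i) - f B0 (F' i) + R) / Δ i)
    rw [heq] at l1 u1
    rw [le_div_iff₀ hD] at l1 l0
    rw [div_lt_iff₀ hD] at u1 u0
    rw [hsum, hsum, abs_le]
    constructor <;> nlinarith


theorem max_sep {α : Type} [DecidableEq α] (𝒯 : Finset (Finset α)) (r : ℝ) (hr : 0 ≤ r) :
    ∃ N ⊆ 𝒯, (∀ T ∈ N, ∀ T' ∈ N, T ≠ T' → r ≤ ((symmDiff T T').card : ℝ)) ∧
      ∀ T ∈ 𝒯, ∃ P ∈ N, ((symmDiff T P).card : ℝ) ≤ r := by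
  classical
  set W := 𝒯.powerset.filter
    (fun N => ∀ T ∈ N, ∀ T' ∈ N, T ≠ T' → r ≤ ((symmDiff T T').card : ℝ)) with hW
  have hne : W.Nonempty := ⟨∅, by simp [hW]⟩
  obtain ⟨N, hN, hmax⟩ := Finset.exists_max_image W Finset.card hne
  obtain ⟨hN1, hN2⟩ := Finset.mem_filter.mp hN
  have hN1' := Finset.mem_powerset.mp hN1
  refine ⟨N, hN1', hN2, ?_⟩
  intro T hT
  by_contra hno
  push Not at hno
  have hTN : T ∉ N := by
    intro h
    have := hno T h
    simp at this
    linarith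
  have : insert T N ∈ W := by
    refine Finset.mem_filter.mpr ⟨Finset.mem_powerset.mpr (Finset.insert_subset hT hN1'), ?_⟩
    intro A hA B hB hAB
    rcases Finset.mem_insert.mp hA with hA2 | hA2 <;> rcases Finset.mem_insert.mp hB with hB2 | hB2
    · exact absurd (hA2.trans hB2.symm) hAB
    · rw [hA2]; exact (hno B hB2).le
    · rw [hB2, symmDiff_comm]; exact (hno A hA2).le
    · exact hN2 A hA2 B hB2 hAB
  have := hmax _ this
  rw [Finset.card_insert_of_notMem hTN] at this
  omega

theorem net_exists {α : Type} [DecidableEq α] (C c : ℝ) (hc : 0 < c) (d₁ e : ℕ)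
    (hpack : ∀ (Y : Finset α) (P : Finset (Finset α)) (k : ℕ) (δ : ℝ),
      0 < δ → δ ≤ k → δ ≤ Y.card →
      (∀ T ∈ P, T ⊆ Y) → (∀ T ∈ P, T.card ≤ k) →
      (∀ T ∈ P, ∀ T' ∈ P, T ≠ T' → δ ≤ ((symmDiff T T').card : ℝ)) →
      (∀ Z ⊆ Y, 1 ≤ Z.card → ∀ κ : ℕ, 1 ≤ κ →
        (((P.image (· ∩ Z)).filter fun T => T.card ≤ κ).card : ℝ) ≤ C * (Z.card : ℝ)^d₁ * (κ : ℝ)^e) →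
      (P.card : ℝ) * δ^(d₁+e) ≤ c * (Y.card : ℝ)^d₁ * (k:ℝ)^e)
    (Y : Finset α) (𝒯 : Finset (Finset α)) (h0 : ∅ ∈ 𝒯) (hY : ∀ T ∈ 𝒯, T ⊆ Y)
    (hcnt : ∀ Z ⊆ Y, 1 ≤ Z.card → ∀ κ : ℕ, 1 ≤ κ →
        (((𝒯.image (· ∩ Z)).filter fun T => T.card ≤ κ).card : ℝ) ≤ C * (Z.card : ℝ)^d₁ * (κ : ℝ)^e)
    (k : ℕ) (r : ℝ) (hr : 0 < r) :
    ∃ N ⊆ 𝒯, (N.card : ℝ) * r^(d₁+e) ≤ c * (Y.card : ℝ)^d₁ * (k:ℝ)^e ∧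
      ((Y.card : ℝ) < r → N = ∅) ∧ (∀ T ∈ N, T.card ≤ k) ∧
      ∀ T, ∃ P, T ∈ 𝒯 → T.card ≤ k → P ∈ 𝒯 ∧ ((symmDiff T P).card : ℝ) ≤ r ∧ (P ∈ N ∨ P = ∅) := by
  by_cases hcond : r ≤ k ∧ r ≤ Y.card
  · obtain ⟨N, hN1, hN2, hN3⟩ := max_sep (𝒯.filter fun T => T.card ≤ k) r hr.le
    have hN𝒯 : N ⊆ 𝒯 := hN1.trans (Finset.filter_subset _ _)
    have hNk : ∀ T ∈ N, T.card ≤ k := fun T hT => (Finset.mem_filter.mp (hN1 hT)).2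
    refine ⟨N, hN𝒯, ?_, fun h => absurd hcond.2 (not_le.mpr h), hNk, ?_⟩
    · refine hpack Y N k r hr hcond.1 hcond.2 (fun T hT => hY T (hN𝒯 hT)) hNk hN2 ?_
      intro Z hZ hZ1 κ hκ
      refine le_trans ?_ (hcnt Z hZ hZ1 κ hκ)
      exact_mod_cast Finset.card_le_card (Finset.filter_subset_filter _ (Finset.image_subset_image hN𝒯))
    · intro T
      by_cases hT : T ∈ 𝒯 ∧ T.card ≤ k
      · obtain ⟨P, hP, hPr⟩ := hN3 T (Finset.mem_filter.mpr hT)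
        exact ⟨P, fun _ _ => ⟨hN𝒯 hP, hPr, Or.inl hP⟩⟩
      · exact ⟨∅, fun h1 h2 => absurd ⟨h1, h2⟩ hT⟩
  · refine ⟨∅, Finset.empty_subset _, ?_, fun _ => rfl, by simp, ?_⟩
    · simp only [Finset.card_empty, Nat.cast_zero, zero_mul]; positivity
    · intro T
      refine ⟨∅, fun h1 h2 => ⟨h0, ?_, Or.inr rfl⟩⟩
      have e1 : symmDiff T ∅ = T := symmDiff_bot T
      rw [e1]
      have a1 : (T.card : ℝ) ≤ k := by exact_mod_cast h2
      have a2 : (T.card : ℝ) ≤ Y.card := by exact_mod_cast Finset.card_le_card (hY T h1)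
      by_contra hlt
      push Not at hlt
      exact hcond ⟨by linarith, by linarith⟩

theorem sum_geo (J : ℕ) : ∑ j ∈ Finset.range J, (2 * (j:ℝ) + 3) / 2^j ≤ 10 := by
  have : ∑ j ∈ Finset.range J, (2 * (j:ℝ) + 3) / 2^j = 10 - (4 * (J:ℝ) + 10) / 2^J := by
    induction J with
    | zero => norm_num
    | succ J ih =>
      rw [Finset.sum_range_succ, ih, pow_succ]
      push_cast
      field_simp
      ring
  rw [this]
  have : (0:ℝ) ≤ (4 * (J:ℝ) + 10) / 2^J := by positivity
  linarith

theorem one_round {α : Type} [DecidableEq α] (C c : ℝ) (hc : 0 < c) (d₁ e : ℕ) (hd : 1 ≤ d₁ + e)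
    (hpack : ∀ (Y : Finset α) (P : Finset (Finset α)) (k : ℕ) (δ : ℝ),
      0 < δ → δ ≤ k → δ ≤ Y.card →
      (∀ T ∈ P, T ⊆ Y) → (∀ T ∈ P, T.card ≤ k) →
      (∀ T ∈ P, ∀ T' ∈ P, T ≠ T' → δ ≤ ((symmDiff T T').card : ℝ)) →
      (∀ Z ⊆ Y, 1 ≤ Z.card → ∀ κ : ℕ, 1 ≤ κ →
        (((P.image (· ∩ Z)).filter fun T => T.card ≤ κ).card : ℝ) ≤ C * (Z.card : ℝ)^d₁ * (κ : ℝ)^e) →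
      (P.card : ℝ) * δ^(d₁+e) ≤ c * (Y.card : ℝ)^d₁ * (k:ℝ)^e)
    (Y : Finset α) (𝒯 : Finset (Finset α)) (h0 : ∅ ∈ 𝒯) (hY : ∀ T ∈ 𝒯, T ⊆ Y)
    (hcnt : ∀ Z ⊆ Y, 1 ≤ Z.card → ∀ κ : ℕ, 1 ≤ κ →
        (((𝒯.image (· ∩ Z)).filter fun T => T.card ≤ κ).card : ℝ) ≤ C * (Z.card : ℝ)^d₁ * (κ : ℝ)^e)
    (Λ : ℝ) (hΛ : 0 < Λ) (hcard : (𝒯.card : ℝ)^2 * (2 * Real.exp (- Λ / 2)) ≤ 1 / 2)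
    (M : ℕ) (L : ℝ) (hL : 0 < L) (hM : (M : ℝ) ≤ 3 * L) (δ : ℕ → ℝ) (hδ1 : ∀ l, 1 ≤ δ l)
    (hδ : ∀ l, c * (Y.card : ℝ)^d₁ * ((2^l : ℕ) : ℝ)^e ≤ Y.card / (600 * L) * δ l ^ (d₁ + e))
    (hm : 20 ≤ Y.card) :
    ∃ χ : α → ℤ, (∀ x, χ x = 0 ∨ χ x = 1 ∨ χ x = -1) ∧
      Y.card / 10 < (Y.filter fun x => χ x ≠ 0).card ∧
      ∀ l < M, ∀ T ∈ 𝒯, T.card ≤ 2^l → |∑ x ∈ T, (χ x : ℝ)| ≤ 3 * Real.sqrt (Λ * δ l) := by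
  classical
  have hpos : ∀ l, 0 < δ l := fun l => lt_of_lt_of_le one_pos (hδ1 l)
  have hr : ∀ (l j : ℕ), (0:ℝ) < 2^j * δ l := fun l j => mul_pos (by positivity) (hpos l)
  have hnet := fun (l j : ℕ) => net_exists C c hc d₁ e hpack Y 𝒯 h0 hY hcnt (2^l) (2^j * δ l) (hr l j)
  choose N hN𝒯 hNcard hNe hNk par hpar using hnet
  set J0 := Y.card with hJ0
  let Jd : Finset (Σ _ : ℕ × ℕ, Finset α) :=
    (Finset.range M ×ˢ Finset.range J0).sigma (fun p => N p.1 p.2)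
  have hJd : ∀ i ∈ Jd, i.1.1 < M ∧ i.1.2 < J0 ∧ i.2 ∈ N i.1.1 i.1.2 := by
    intro i hi
    obtain ⟨h1, h2⟩ := Finset.mem_sigma.mp hi
    obtain ⟨h3, h4⟩ := Finset.mem_product.mp h1
    exact ⟨Finset.mem_range.mp h3, Finset.mem_range.mp h4, h2⟩
  have hNbound : ∀ l j, ((N l j).card : ℝ) ≤ Y.card / (600 * L) * (1 / 2^j) := by
    intro l j
    have h1 := (hNcard l j).trans (hδ l)
    rw [mul_pow, ← mul_assoc] at h1
    have h2 := le_of_mul_le_mul_right h1 (pow_pos (hpos l) _)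
    have h3 : (2:ℝ)^j ≤ (2^j)^(d₁+e) := le_self_pow₀ (one_le_pow₀ (by norm_num)) (by omega)
    have h4 : ((N l j).card : ℝ) * 2^j ≤ Y.card / (600 * L) :=
      (mul_le_mul_of_nonneg_left h3 (Nat.cast_nonneg _)).trans h2
    rw [mul_one_div, le_div_iff₀ (by positivity)]
    exact h4
  have hmr : (0:ℝ) < Y.card := by exact_mod_cast (by omega : 0 < Y.card)
  have hE : ∑ i ∈ Jd, (2 * i.1.2 + 3) ≤ Y.card / 10 := by
    have h1 : ∑ i ∈ Jd, (2 * i.1.2 + 3) = ∑ l ∈ Finset.range M, ∑ j ∈ Finset.range J0,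
        (N l j).card * (2 * j + 3) := by
      rw [Finset.sum_sigma, Finset.sum_product]
      refine Finset.sum_congr rfl fun l _ => Finset.sum_congr rfl fun j _ => ?_
      simp
    have h2 : ((∑ i ∈ Jd, (2 * i.1.2 + 3) : ℕ) : ℝ) ≤ Y.card / 20 := by
      rw [h1]
      push_cast
      calc ∑ l ∈ Finset.range M, ∑ j ∈ Finset.range J0, ((N l j).card : ℝ) * (2 * (j:ℝ) + 3)
          ≤ ∑ l ∈ Finset.range M, ∑ j ∈ Finset.range J0,
              Y.card / (600 * L) * ((2 * (j:ℝ) + 3) / 2^j) := by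
            refine Finset.sum_le_sum fun l _ => Finset.sum_le_sum fun j _ => ?_
            refine (mul_le_mul_of_nonneg_right (hNbound l j) (by positivity)).trans (le_of_eq ?_)
            ring
        _ ≤ ∑ l ∈ Finset.range M, Y.card / (600 * L) * 10 := by
            refine Finset.sum_le_sum fun l _ => ?_
            rw [← Finset.mul_sum]
            exact mul_le_mul_of_nonneg_left (sum_geo J0) (by positivity)
        _ = M * (Y.card / (600 * L) * 10) := by simp
        _ ≤ (3 * L) * (Y.card / (600 * L) * 10) := by gcongr
        _ = Y.card / 20 := by field_simp; norm_num
    have h3 : 20 * (∑ i ∈ Jd, (2 * i.1.2 + 3)) ≤ Y.card := by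
      have : (20:ℝ) * ((∑ i ∈ Jd, (2 * i.1.2 + 3) : ℕ) : ℝ) ≤ Y.card := by linarith
      exact_mod_cast this
    omega
  have hparN : ∀ l j, ∀ T ∈ N l j, par l (j+1) T ∈ 𝒯 ∧
      ((symmDiff T (par l (j+1) T)).card : ℝ) ≤ 2^(j+1) * δ l ∧
      (par l (j+1) T ∈ N l (j+1) ∨ par l (j+1) T = ∅) := by
    intro l j T hT
    exact hpar l (j+1) T (hN𝒯 l j hT) (hNk l j T hT)
  have hs : ∀ l, 0 < Real.sqrt (Λ * δ l) := fun l => Real.sqrt_pos.mpr (mul_pos hΛ (hpos l))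
  obtain ⟨χ, hχ1, hχ2, hχ3, hχ4⟩ := partial_coloring Y 𝒯 Λ hΛ.le hY hcard Jd (fun i => i.2)
    (fun i => par i.1.1 (i.1.2+1) i.2)
    (fun i hi => hN𝒯 _ _ (hJd i hi).2.2) (fun i hi => (hparN _ _ _ (hJd i hi).2.2).1)
    (fun i => Real.sqrt (Λ * δ i.1.1) / 2^i.1.2) (fun i _ => div_pos (hs _) (by positivity))
    (fun i => 2 * i.1.2 + 3) (by
      intro i hi
      obtain ⟨_, h2, _⟩ := hparN _ _ _ (hJd i hi).2.2
      set l := i.1.1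
      set j := i.1.2
      set σ := Real.sqrt (Λ * δ l) with hσ
      have hσp : 0 < σ := hs l
      have h3 : Real.sqrt (Λ * ((symmDiff i.2 (par l (j+1) i.2)).card : ℝ)) ≤ 2^(j+1) * σ := by
        rw [Real.sqrt_le_left (by positivity), mul_pow, hσ, Real.sq_sqrt (mul_pos hΛ (hpos l)).le]
        have h4 : (2:ℝ)^(j+1) ≤ (2^(j+1))^2 := le_self_pow₀ (one_le_pow₀ (by norm_num)) (by norm_num)
        calc Λ * ((symmDiff i.2 (par l (j+1) i.2)).card : ℝ) ≤ Λ * (2^(j+1) * δ l) := by gcongr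
          _ ≤ Λ * ((2^(j+1))^2 * δ l) := by have := hpos l; gcongr
          _ = _ := by ring
      have h5 : (1:ℝ) ≤ 2^j := one_le_pow₀ (by norm_num)
      calc 2 * Real.sqrt (Λ * ((symmDiff i.2 (par l (j+1) i.2)).card : ℝ)) / (σ / 2^j) + 1
          ≤ 2 * (2^(j+1) * σ) / (σ / 2^j) + 1 := by gcongr
        _ = 4 * (2^j)^2 + 1 := by field_simp; ring
        _ ≤ 8 * (2^j)^2 := by nlinarith
        _ = 2^(2*j+3) := by rw [pow_add, pow_mul']; norm_num; ring)
    (Y.card / 10) (by omega) (by omega) hE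
  refine ⟨χ, hχ1, hχ2, ?_⟩
  have hchain : ∀ l < M, ∀ s j, j + s = J0 → ∀ T ∈ N l j,
      |∑ x ∈ T, (χ x : ℝ)| ≤ 2 * Real.sqrt (Λ * δ l) / 2^j := by
    intro l hl s
    induction s with
    | zero =>
      intro j hj T hT
      exfalso
      have : N l j = ∅ := by
        apply hNe
        have h1 : (Y.card : ℝ) < 2^j := by
          have : j = Y.card := by omega
          rw [this]
          exact_mod_cast Nat.lt_two_pow_self
        have h2 : (2:ℝ)^j * 1 ≤ 2^j * δ l := by have := hδ1 l; gcongr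
        linarith
      rw [this] at hT
      simp at hT
    | succ s ih =>
      intro j hj T hT
      obtain ⟨_, _, h3⟩ := hparN l j T hT
      have hi : (⟨(l, j), T⟩ : Σ _ : ℕ × ℕ, Finset α) ∈ Jd := by
        refine Finset.mem_sigma.mpr ⟨Finset.mem_product.mpr ⟨Finset.mem_range.mpr hl,
          Finset.mem_range.mpr (by simp only; omega)⟩, hT⟩
      have h4 := hχ4 _ hi
      simp only at h4
      have h5 : |∑ x ∈ par l (j+1) T, (χ x : ℝ)| ≤ 2 * Real.sqrt (Λ * δ l) / 2^(j+1) := by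
        rcases h3 with h | h
        · exact ih (j+1) (by omega) _ h
        · rw [h]; simp; positivity
      have e1 : 2 * Real.sqrt (Λ * δ l) / 2^(j+1) = Real.sqrt (Λ * δ l) / 2^j := by
        rw [pow_succ]; field_simp
      rw [e1] at h5
      have e2 : 2 * Real.sqrt (Λ * δ l) / 2^j = Real.sqrt (Λ * δ l) / 2^j + Real.sqrt (Λ * δ l) / 2^j := by
        ring
      rw [e2]
      have := abs_add_le (∑ x ∈ T, (χ x : ℝ) - ∑ x ∈ par l (j+1) T, (χ x : ℝ)) (∑ x ∈ par l (j+1) T, (χ x : ℝ))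
      rw [sub_add_cancel] at this
      linarith
  intro l hl T hT hTl
  obtain ⟨h1, h2, h3⟩ := hpar l 0 T hT hTl
  rw [pow_zero, one_mul] at h2
  have h4 := hχ3 T hT _ h1
  have h5 : |∑ x ∈ par l 0 T, (χ x : ℝ)| ≤ 2 * Real.sqrt (Λ * δ l) := by
    rcases h3 with h | h
    · have := hchain l hl J0 0 (by omega) _ h
      simpa using this
    · rw [h]; simp
  have h6 : Real.sqrt (Λ * ((symmDiff T (par l 0 T)).card : ℝ)) ≤ Real.sqrt (Λ * δ l) :=
    Real.sqrt_le_sqrt (by gcongr)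
  have := abs_add_le (∑ x ∈ T, (χ x : ℝ) - ∑ x ∈ par l 0 T, (χ x : ℝ)) (∑ x ∈ par l 0 T, (χ x : ℝ))
  rw [sub_add_cancel] at this
  linarith


theorem iterate_rounds {α : Type} [DecidableEq α] (X : Finset α) (𝒮 : Finset (Finset α))
    (Bd : Finset α → ℝ) (hBd : ∀ S, 0 ≤ Bd S)
    (hstep : ∀ Y ⊆ X, 20 ≤ Y.card → ∃ χ : α → ℤ, (∀ x, χ x = 0 ∨ χ x = 1 ∨ χ x = -1) ∧
      Y.card / 10 < (Y.filter fun x => χ x ≠ 0).card ∧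
      ∀ S ∈ 𝒮, |∑ x ∈ S ∩ Y, (χ x : ℝ)| ≤ Bd S) (r : ℕ) :
    ∀ Y ⊆ X, (Y.card : ℝ) ≤ 20 * (10/9)^r → ∃ χ : α → ℤ, (∀ x ∈ Y, χ x = 1 ∨ χ x = -1) ∧
      ∀ S ∈ 𝒮, |∑ x ∈ S ∩ Y, (χ x : ℝ)| ≤ r * Bd S + 20 := by
  have triv : ∀ (r : ℕ) (Y : Finset α), Y.card ≤ 20 → ∃ χ : α → ℤ, (∀ x ∈ Y, χ x = 1 ∨ χ x = -1) ∧
      ∀ S ∈ 𝒮, |∑ x ∈ S ∩ Y, (χ x : ℝ)| ≤ r * Bd S + 20 := by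
    intro r Y hYc
    refine ⟨fun _ => 1, fun _ _ => Or.inl rfl, fun S _ => ?_⟩
    simp only [Int.cast_one, Finset.sum_const, nsmul_eq_mul, mul_one, Nat.abs_cast]
    have h1 : (S ∩ Y).card ≤ 20 := (Finset.card_le_card Finset.inter_subset_right).trans hYc
    have h2 : ((S ∩ Y).card : ℝ) ≤ 20 := by exact_mod_cast h1
    have := mul_nonneg (Nat.cast_nonneg (α := ℝ) r) (hBd S)
    linarith
  induction r with
  | zero =>
    intro Y _ hYc
    apply triv
    rw [pow_zero, mul_one] at hYc
    exact_mod_cast hYc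
  | succ r ih =>
    intro Y hY hYc
    rcases le_or_gt Y.card 20 with h20 | h20
    · exact triv _ Y h20
    obtain ⟨χ0, h1, h2, h3⟩ := hstep Y hY h20.le
    set Y' := Y.filter (fun x => χ0 x = 0) with hY'
    have hsub : Y' ⊆ Y := Finset.filter_subset _ _
    have hcard : Y'.card + (Y.filter fun x => χ0 x ≠ 0).card = Y.card :=
      Finset.card_filter_add_card_filter_not (s := Y) (fun x => χ0 x = 0)
    have hcard' : 10 * Y'.card ≤ 9 * Y.card := by omega
    have hcard2 : (10:ℝ) * Y'.card ≤ 9 * Y.card := by exact_mod_cast hcard'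
    obtain ⟨χ1, g1, g2⟩ := ih Y' (hsub.trans hY) (by
      rw [pow_succ] at hYc
      linarith)
    refine ⟨fun x => if χ0 x = 0 then χ1 x else χ0 x, ?_, ?_⟩
    · intro x hx
      by_cases h : χ0 x = 0
      · simp only [h, if_true]
        exact g1 x (Finset.mem_filter.mpr ⟨hx, h⟩)
      · simp only [h, if_false]
        exact (h1 x).resolve_left h
    · intro S hS
      have e1 : ∑ x ∈ S ∩ Y, (((if χ0 x = 0 then χ1 x else χ0 x : ℤ)) : ℝ) =
          ∑ x ∈ S ∩ Y, (χ0 x : ℝ) + ∑ x ∈ S ∩ Y', (χ1 x : ℝ) := by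
        have : S ∩ Y' = (S ∩ Y).filter (fun x => χ0 x = 0) := by
          ext x; simp [hY', and_assoc]
        rw [this, Finset.sum_filter, ← Finset.sum_add_distrib]
        refine Finset.sum_congr rfl fun x _ => ?_
        by_cases h : χ0 x = 0 <;> simp [h]
      rw [e1]
      refine (abs_add_le _ _).trans ?_
      have := h3 S hS
      have := g2 S hS
      push_cast
      linarith

theorem final_arith (d d₁ e : ℕ) (hd : 1 < d) (hd₁ : 1 ≤ d₁) (hde : d₁ + e = d) (c2 A L n s : ℝ)
    (hc2 : 0 < c2) (hA : 1 ≤ A) (hL : 1 ≤ L) (hn : 1 ≤ n) (hs : 1 ≤ s) :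
    (8 * L) * (3 * Real.sqrt ((c2 * L) * (A * n^(d₁-1) * (2 * s)^e * L)^((1:ℝ)/d))) + 20 ≤
      (24 * Real.sqrt c2 * (A * 2^e)^((1:ℝ)/(2*d)) + 20) * s^((1:ℝ)/2 - (d₁:ℝ)/(2*(d:ℝ))) *
        n^(((d₁:ℝ)-1)/(2*(d:ℝ))) * L^((3:ℝ)/2 + 1/(2*(d:ℝ))) := by
  have hd0 : (0:ℝ) < d := by exact_mod_cast (by omega : 0 < d)
  have hL0 : 0 < L := by linarith
  have hn0 : 0 < n := by linarith
  have hs0 : 0 < s := by linarith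
  have hA0 : 0 < A := by linarith
  have hde' : (d₁:ℝ) + e = d := by exact_mod_cast hde
  have hd1' : (1:ℝ) ≤ d₁ := by exact_mod_cast hd₁
  have e1 : Real.sqrt ((c2 * L) * (A * n^(d₁-1) * (2 * s)^e * L)^((1:ℝ)/d)) =
      Real.sqrt c2 * (A * 2^e)^((1:ℝ)/(2*d)) * s^((1:ℝ)/2 - (d₁:ℝ)/(2*(d:ℝ))) *
        n^(((d₁:ℝ)-1)/(2*(d:ℝ))) * L^((1:ℝ)/2 + 1/(2*(d:ℝ))) := by
    have r1 : A * n^(d₁-1) * (2 * s)^e * L = (A * 2^e) * s^(e:ℝ) * n^((d₁:ℝ)-1) * L := by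
      rw [mul_pow, Real.rpow_natCast]
      have : n^((d₁:ℝ)-1) = n^(d₁-1) := by
        rw [← Real.rpow_natCast, Nat.cast_sub hd₁]; simp
      rw [this]; ring
    rw [r1, Real.sqrt_mul (by positivity), Real.sqrt_mul hc2.le, Real.sqrt_eq_rpow (_ ^ _),
      ← Real.rpow_mul (by positivity), Real.mul_rpow (by positivity) hL0.le,
      Real.mul_rpow (by positivity) (by positivity), Real.mul_rpow (by positivity) (by positivity),
      ← Real.rpow_mul hs0.le, ← Real.rpow_mul hn0.le, Real.sqrt_eq_rpow L, Real.rpow_add hL0]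
    have x1 : (1:ℝ) / d * (1/2) = 1/(2*d) := by field_simp
    have x2 : (e:ℝ) * (1/(2*d)) = (1:ℝ)/2 - (d₁:ℝ)/(2*(d:ℝ)) := by
      field_simp; linarith
    have x3 : ((d₁:ℝ)-1) * (1/(2*d)) = ((d₁:ℝ)-1)/(2*(d:ℝ)) := by ring
    rw [x1, x2, x3]
    ring
  have e2 : L^((3:ℝ)/2 + 1/(2*(d:ℝ))) = L * L^((1:ℝ)/2 + 1/(2*(d:ℝ))) := by
    nth_rw 2 [← Real.rpow_one L]
    rw [← Real.rpow_add hL0]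
    congr 1; ring
  have p1 : 1 ≤ s^((1:ℝ)/2 - (d₁:ℝ)/(2*(d:ℝ))) := by
    apply Real.one_le_rpow hs
    have : (d₁:ℝ)/(2*(d:ℝ)) ≤ 1/2 := by
      rw [div_le_div_iff₀ (by positivity) (by norm_num)]
      have : (0:ℝ) ≤ e := Nat.cast_nonneg _
      linarith
    linarith
  have p2 : 1 ≤ n^(((d₁:ℝ)-1)/(2*(d:ℝ))) :=
    Real.one_le_rpow hn (div_nonneg (by linarith) (by positivity))
  have p3 : 1 ≤ L^((3:ℝ)/2 + 1/(2*(d:ℝ))) := Real.one_le_rpow hL (by positivity)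
  rw [e1]
  have p4 : 1 ≤ s^((1:ℝ)/2 - (d₁:ℝ)/(2*(d:ℝ))) * n^(((d₁:ℝ)-1)/(2*(d:ℝ))) *
      L^((3:ℝ)/2 + 1/(2*(d:ℝ))) :=
    one_le_mul_of_one_le_of_one_le (one_le_mul_of_one_le_of_one_le p1 p2) p3
  have e3 : (24 * Real.sqrt c2 * (A * 2^e)^((1:ℝ)/(2*d)) + 20) * s^((1:ℝ)/2 - (d₁:ℝ)/(2*(d:ℝ))) *
        n^(((d₁:ℝ)-1)/(2*(d:ℝ))) * L^((3:ℝ)/2 + 1/(2*(d:ℝ))) =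
      24 * Real.sqrt c2 * (A * 2^e)^((1:ℝ)/(2*d)) * s^((1:ℝ)/2 - (d₁:ℝ)/(2*(d:ℝ))) *
        n^(((d₁:ℝ)-1)/(2*(d:ℝ))) * L^((3:ℝ)/2 + 1/(2*(d:ℝ))) +
      20 * (s^((1:ℝ)/2 - (d₁:ℝ)/(2*(d:ℝ))) * n^(((d₁:ℝ)-1)/(2*(d:ℝ))) *
      L^((3:ℝ)/2 + 1/(2*(d:ℝ)))) := by ring
  rw [e3]
  refine add_le_add (le_of_eq ?_) (by linarith)
  rw [e2]; ring

theorem cond_ext {α : Type} [DecidableEq α] (d₁ e : ℕ) (C : ℝ) (hC : 0 < C)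
    (X : Finset α) (𝒮 : Finset (Finset α))
    (h : ∀ Y ⊆ X, ∀ k : ℕ, 1 ≤ k → k ≤ Y.card →
          (((𝒮.image (· ∩ Y)).filter fun T => T.card ≤ k).card : ℝ) ≤
            C * (Y.card : ℝ) ^ d₁ * (k : ℝ) ^ e) :
    ∀ Z ⊆ X, 1 ≤ Z.card → ∀ κ : ℕ, 1 ≤ κ →
        ((((insert ∅ 𝒮).image (· ∩ Z)).filter fun T => T.card ≤ κ).card : ℝ) ≤
          (C + 1) * (Z.card : ℝ)^d₁ * (κ : ℝ)^e := by
  intro Z hZ hZ1 κ hκ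
  have h1 := h Z hZ (min κ Z.card) (le_min hκ hZ1) (min_le_right _ _)
  have hsub : (((insert ∅ 𝒮).image (· ∩ Z)).filter fun T => T.card ≤ κ) ⊆
      insert ∅ ((𝒮.image (· ∩ Z)).filter fun T => T.card ≤ min κ Z.card) := by
    intro T hT
    obtain ⟨hT1, hT2⟩ := Finset.mem_filter.mp hT
    obtain ⟨S, hS, rfl⟩ := Finset.mem_image.mp hT1
    rcases Finset.mem_insert.mp hS with rfl | hS
    · simp
    · refine Finset.mem_insert_of_mem (Finset.mem_filter.mpr ⟨Finset.mem_image_of_mem _ hS, ?_⟩)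
      exact le_min hT2 (Finset.card_le_card Finset.inter_subset_right)
  have h2 := (Finset.card_le_card hsub).trans (Finset.card_insert_le _ _)
  have h3 : ((((insert ∅ 𝒮).image (· ∩ Z)).filter fun T => T.card ≤ κ).card : ℝ) ≤
      (((𝒮.image (· ∩ Z)).filter fun T => T.card ≤ min κ Z.card).card : ℝ) + 1 := by exact_mod_cast h2
  have h4 : C * (Z.card : ℝ) ^ d₁ * ((min κ Z.card : ℕ) : ℝ) ^ e ≤ C * (Z.card : ℝ) ^ d₁ * (κ : ℝ) ^ e := by
    have : ((min κ Z.card : ℕ) : ℝ) ≤ κ := by exact_mod_cast min_le_left _ _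
    gcongr
  have h5 : (1:ℝ) ≤ (Z.card : ℝ)^d₁ * (κ:ℝ)^e :=
    one_le_mul_of_one_le_of_one_le (one_le_pow₀ (by exact_mod_cast hZ1)) (one_le_pow₀ (by exact_mod_cast hκ))
  have : (C + 1) * (Z.card : ℝ)^d₁ * (κ : ℝ)^e =
      C * (Z.card : ℝ) ^ d₁ * (κ : ℝ) ^ e + (Z.card : ℝ)^d₁ * (κ:ℝ)^e := by ring
  linarith

set_option maxHeartbeats 2000000 in
theorem stmt11 (d d₁ : ℕ) (hd : 1 < d) (hd₁ : 1 ≤ d₁) (hd₁d : d₁ ≤ d)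
    (C : ℝ) (hC : 0 < C) :
    ∃ K : ℝ, 0 < K ∧ ∃ n₀ : ℕ,
      ∀ (α : Type) [DecidableEq α] (X : Finset α) (𝒮 : Finset (Finset α)),
        n₀ ≤ X.card → (∀ S ∈ 𝒮, S ⊆ X) →
        (∀ Y ⊆ X, ∀ k : ℕ, 1 ≤ k → k ≤ Y.card →
          (((𝒮.image (· ∩ Y)).filter fun T => T.card ≤ k).card : ℝ) ≤
            C * (Y.card : ℝ) ^ d₁ * (k : ℝ) ^ (d - d₁)) →
        ∃ χ : α → ℤ,
          (∀ x ∈ X, χ x = 1 ∨ χ x = -1) ∧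
          ∀ S ∈ 𝒮, |(∑ x ∈ S, (χ x : ℝ))| ≤
            K * (S.card : ℝ) ^ ((1 : ℝ) / 2 - (d₁ : ℝ) / (2 * (d : ℝ))) *
              (X.card : ℝ) ^ (((d₁ : ℝ) - 1) / (2 * (d : ℝ))) *
              Real.logb 2 (X.card : ℝ) ^ ((3 : ℝ) / 2 + 1 / (2 * (d : ℝ))) := by
  obtain ⟨e, hde⟩ := Nat.exists_eq_add_of_le hd₁d
  have he : d - d₁ = e := by omega
  rw [he]
  obtain ⟨c, hc, hpack⟩ := packing (C + 1) (by linarith) d₁ e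
  set A : ℝ := max (600 * c) 1 with hAdef
  have hA1 : 1 ≤ A := le_max_right _ _
  have hAc : 600 * c ≤ A := le_max_left _ _
  have hA0 : 0 < A := by linarith
  set c2 : ℝ := 2 * Real.log (4 * (C+1)^2) + 4 * d with hc2def
  have hd0 : (0:ℝ) < d := by exact_mod_cast (by omega : 0 < d)
  have hlog0 : 0 ≤ Real.log (4 * (C+1)^2) := Real.log_nonneg (by nlinarith)
  have hc2 : 0 < c2 := by positivity
  refine ⟨24 * Real.sqrt c2 * (A * 2^e)^((1:ℝ)/(2*d)) + 20, by positivity, 2, ?_⟩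
  intro α _ X 𝒮 hn hSX hcnt0
  have hcnt := cond_ext d₁ e C hC X 𝒮 hcnt0
  set n : ℝ := ((X.card : ℕ) : ℝ) with hndef
  have hn2 : (2:ℝ) ≤ n := by rw [hndef]; exact_mod_cast hn
  have hn0 : 0 < n := by linarith
  set L : ℝ := Real.logb 2 n with hLdef
  have hL1 : 1 ≤ L := by
    rw [hLdef, Real.le_logb_iff_rpow_le (by norm_num) hn0]; simpa using hn2
  have hL0 : 0 < L := by linarith
  have hnL : n ≤ (2:ℝ)^L := (Real.rpow_logb (by norm_num) (by norm_num) hn0).symm.le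
  have hlogn : Real.log n ≤ L := by
    rw [hLdef, Real.logb, le_div_iff₀ (Real.log_pos (by norm_num))]
    have h1 : Real.log 2 ≤ 1 := by have := Real.log_two_lt_d9; linarith
    have h2 : 0 ≤ Real.log n := Real.log_nonneg (by linarith)
    nlinarith
  set Λ : ℝ := c2 * L with hΛdef
  have hΛ : 0 < Λ := by positivity
  set M : ℕ := Nat.log 2 X.card + 2 with hMdef
  have hM : (M : ℝ) ≤ 3 * L := by
    have h1 : ((Nat.log 2 X.card : ℕ) : ℝ) ≤ L := by
      rw [hLdef, Real.le_logb_iff_rpow_le (by norm_num) hn0, Real.rpow_natCast, hndef]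
      exact_mod_cast Nat.pow_log_le_self 2 (by omega)
    rw [hMdef]; push_cast; linarith
  clear_value L
  clear hLdef
  set δ : ℕ → ℝ := fun l => (A * n^(d₁-1) * ((2:ℝ)^l)^e * L)^((1:ℝ)/d) with hδdef
  have hbase1 : ∀ l : ℕ, 1 ≤ A * n^(d₁-1) * ((2:ℝ)^l)^e * L := by
    intro l
    have q1 : 1 ≤ n^(d₁-1) := one_le_pow₀ (by linarith)
    have q2 : 1 ≤ ((2:ℝ)^l)^e := one_le_pow₀ (one_le_pow₀ (by norm_num))
    exact one_le_mul_of_one_le_of_one_le (one_le_mul_of_one_le_of_one_le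
      (one_le_mul_of_one_le_of_one_le hA1 q1) q2) hL1
  have hδ1 : ∀ l, 1 ≤ δ l := fun l => Real.one_le_rpow (hbase1 l) (by positivity)
  have hδpow : ∀ l, δ l ^ (d₁ + e) = A * n^(d₁-1) * ((2:ℝ)^l)^e * L := by
    intro l
    rw [← hde, hδdef]
    simp only [one_div]
    exact Real.rpow_inv_natCast_pow (by linarith [hbase1 l]) (by omega)
  set Bd : Finset α → ℝ := fun S =>
    3 * Real.sqrt (Λ * (A * n^(d₁-1) * (2 * (S.card:ℝ))^e * L)^((1:ℝ)/d)) with hBd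
  have hstep : ∀ Y ⊆ X, 20 ≤ Y.card → ∃ χ : α → ℤ, (∀ x, χ x = 0 ∨ χ x = 1 ∨ χ x = -1) ∧
      Y.card / 10 < (Y.filter fun x => χ x ≠ 0).card ∧
      ∀ S ∈ 𝒮, |∑ x ∈ S ∩ Y, (χ x : ℝ)| ≤ Bd S := by
    intro Y hY hY20
    have hYn : (Y.card : ℝ) ≤ n := by rw [hndef]; exact_mod_cast Finset.card_le_card hY
    have hY0 : (0:ℝ) < Y.card := by exact_mod_cast (by omega : 0 < Y.card)
    set 𝒯 := (insert ∅ 𝒮).image (· ∩ Y) with h𝒯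
    have h𝒯Y : ∀ T ∈ 𝒯, T ⊆ Y := by
      intro T hT
      obtain ⟨S, _, rfl⟩ := Finset.mem_image.mp hT
      exact Finset.inter_subset_right
    have h𝒯0 : ∅ ∈ 𝒯 := Finset.mem_image.mpr ⟨∅, Finset.mem_insert_self _ _, by simp⟩
    have h𝒯cnt : ∀ Z ⊆ Y, 1 ≤ Z.card → ∀ κ : ℕ, 1 ≤ κ →
        (((𝒯.image (· ∩ Z)).filter fun T => T.card ≤ κ).card : ℝ) ≤
          (C + 1) * (Z.card : ℝ)^d₁ * (κ : ℝ)^e := by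
      intro Z hZ hZ1 κ hκ
      have : 𝒯.image (· ∩ Z) = (insert ∅ 𝒮).image (· ∩ Z) := by
        rw [h𝒯, Finset.image_image]
        refine Finset.image_congr fun S _ => ?_
        simp only [Function.comp]
        rw [Finset.inter_assoc, Finset.inter_eq_right.mpr hZ]
      rw [this]
      exact hcnt Z (hZ.trans hY) hZ1 κ hκ
    have h𝒯card : (𝒯.card : ℝ) ≤ (C + 1) * n^d := by
      have h1 := hcnt Y hY (by omega) Y.card (by omega)
      rw [Finset.filter_true_of_mem (fun T hT => Finset.card_le_card (h𝒯Y T hT))] at h1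
      refine h1.trans ?_
      rw [mul_assoc, ← pow_add, ← hde]
      gcongr
    have hcard : (𝒯.card : ℝ)^2 * (2 * Real.exp (- Λ / 2)) ≤ 1 / 2 := by
      have h1 : 4 * (C+1)^2 * (n^d)^2 ≤ Real.exp (Λ / 2) := by
        have : 4 * (C+1)^2 * (n^d)^2 = Real.exp (Real.log (4 * (C+1)^2) + 2 * d * Real.log n) := by
          rw [Real.exp_add, Real.exp_log (by positivity)]
          congr 1
          rw [← pow_mul, mul_comm d 2, ← Real.rpow_natCast, Real.rpow_def_of_pos hn0]
          push_cast
          congr 1; ring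
        rw [this]
        apply Real.exp_le_exp.mpr
        rw [hΛdef, hc2def]
        nlinarith
      have h2 : (𝒯.card : ℝ)^2 ≤ ((C+1) * n^d)^2 := by gcongr
      have h3 : Real.exp (-Λ/2) = (Real.exp (Λ/2))⁻¹ := by rw [← Real.exp_neg]; congr 1; ring
      rw [h3]
      have h4 := Real.exp_pos (Λ/2)
      rw [← mul_assoc, ← div_eq_mul_inv, div_le_iff₀ h4]
      nlinarith
    obtain ⟨χ, hχ1, hχ2, hχ3⟩ := one_round (C+1) c hc d₁ e (by omega) (hpack α) Y 𝒯 h𝒯0 h𝒯Y h𝒯cnt Λ hΛ hcard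
      M L hL0 hM δ hδ1 (by
        intro l
        rw [hδpow]
        push_cast
        have h1 : (Y.card : ℝ)^d₁ ≤ Y.card * n^(d₁-1) := by
          obtain ⟨f, rfl⟩ : ∃ f, d₁ = f + 1 := ⟨d₁ - 1, by omega⟩
          rw [pow_succ, mul_comm, Nat.add_sub_cancel]
          gcongr
        calc c * (Y.card : ℝ)^d₁ * ((2:ℝ)^l)^e ≤ (A / 600) * (Y.card * n^(d₁-1)) * ((2:ℝ)^l)^e := by
              gcongr
              linarith
          _ = _ := by field_simp) hY20
    refine ⟨χ, hχ1, hχ2, fun S hS => ?_⟩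
    have hT : S ∩ Y ∈ 𝒯 := Finset.mem_image.mpr ⟨S, Finset.mem_insert_of_mem hS, rfl⟩
    rcases Nat.eq_zero_or_pos (S ∩ Y).card with h0 | h0
    · rw [Finset.card_eq_zero.mp h0]
      simp only [Finset.sum_empty, abs_zero]
      positivity
    · set l := Nat.log 2 (S ∩ Y).card + 1 with hl
      have hTl : (S ∩ Y).card ≤ 2^l := (Nat.lt_pow_succ_log_self (by norm_num) _).le
      have hlM : l < M := by
        have : Nat.log 2 (S ∩ Y).card ≤ Nat.log 2 X.card :=
          Nat.log_mono_right (Finset.card_le_card (Finset.inter_subset_right.trans hY))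
        omega
      refine (hχ3 l hlM _ hT hTl).trans ?_
      have h2l : (2:ℝ)^l ≤ 2 * S.card := by
        have h1 : 2^(Nat.log 2 (S ∩ Y).card) ≤ (S ∩ Y).card := Nat.pow_log_le_self 2 (by omega)
        have h2 : (S ∩ Y).card ≤ S.card := Finset.card_le_card Finset.inter_subset_left
        have h3 : 2^l ≤ 2 * S.card := by rw [hl, pow_succ]; omega
        exact_mod_cast h3
      simp only [hBd, hδdef]
      gcongr
  have hBd0 : ∀ S, 0 ≤ Bd S := fun S => by positivity
  set r : ℕ := ⌈7 * L⌉₊ with hr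
  have hr1 : 7 * L ≤ r := Nat.le_ceil _
  have hr2 : (r:ℝ) ≤ 8 * L := by
    have : (r:ℝ) < 7 * L + 1 := Nat.ceil_lt_add_one (by positivity)
    linarith
  obtain ⟨χ, hχ1, hχ2⟩ := iterate_rounds X 𝒮 Bd hBd0 hstep r X (Finset.Subset.refl _) (by
    have h1 : n ≤ (10/9:ℝ)^r := by
      rw [← Real.rpow_natCast]
      calc n ≤ (2:ℝ)^L := hnL
        _ ≤ ((10/9:ℝ)^(7:ℝ))^L := by
            apply Real.rpow_le_rpow (by norm_num) _ hL0.le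
            have : ((10/9:ℝ)^(7:ℝ)) = (10/9:ℝ)^(7:ℕ) := by
              rw [← Real.rpow_natCast]; norm_num
            rw [this]; norm_num
        _ = (10/9:ℝ)^(7*L) := by rw [← Real.rpow_mul (by norm_num)]
        _ ≤ _ := Real.rpow_le_rpow_of_exponent_le (by norm_num) hr1
    linarith)
  refine ⟨χ, hχ1, fun S hS => ?_⟩
  rcases Nat.eq_zero_or_pos S.card with h0 | h0
  · rw [Finset.card_eq_zero.mp h0]
    simp only [Finset.sum_empty, abs_zero]
    positivity
  · have h1 := hχ2 S hS
    rw [Finset.inter_eq_left.mpr (hSX S hS)] at h1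
    have h2 := final_arith d d₁ e hd hd₁ hde.symm c2 A L n S.card hc2 hA1 hL1 (by linarith)
      (by exact_mod_cast h0)
    refine le_trans ?_ h2
    refine h1.trans ?_
    have := mul_le_mul_of_nonneg_right hr2 (hBd0 S)
    simp only [hBd, hΛdef] at this ⊢
    linarith
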